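/- For every β ≥ 0, the finite Hilbert transform T maps L(log L)^{1+β}(-1,1) boundedly into L(log L)^{β}(-1,1); that is, there is a constant C_β > 0 such that ‖T(f)‖_{L(log L)^{β}} ≤ C_β ‖f‖_{L(log L)^{1+β}} for all f ∈ L(log L)^{1+β}(-1,1). -/

import Mathlib

open MeasureTheory Set Filter

noncomputable section

/-- Lebesgue measure restricted to the interval `(-1, 1)`. -/
def μI : Measure ℝ := volume.restrict (Set.Ioo (-1 : ℝ) 1)

/-- The finite Hilbert transform: the principal-value limit
`T(f)(t) = lim_{ε→0⁺} (1/π) ∫_{x∈(-1,1), |x-t|≥ε} f(x)/(x-t) dx`. -/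
def FHT (f : ℝ → ℂ) (t : ℝ) : ℂ :=
  limUnder (nhdsWithin (0 : ℝ) (Set.Ioi 0)) fun ε : ℝ =>
    (Real.pi : ℂ)⁻¹ *
      ∫ x in {x : ℝ | x ∈ Set.Ioo (-1 : ℝ) 1 ∧ ε ≤ |x - t|}, f x / ((x : ℂ) - (t : ℂ))

/-- The operator `T̂(g)(x) = -(1-x²)^{-1/2} T(t ↦ √(1-t²) g(t))(x)`. -/
def hatT (g : ℝ → ℂ) (x : ℝ) : ℂ :=
  -((Real.sqrt (1 - x ^ 2) : ℂ))⁻¹ * FHT (fun t => (Real.sqrt (1 - t ^ 2) : ℂ) * g t) x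

/-- Membership in the Zygmund space `L log L(-1,1)`:
`f` is a.e. measurable on `(-1,1)` and `∫ |f| log⁺|f| < ∞`. -/
def MemLlogL (f : ℝ → ℂ) : Prop :=
  AEStronglyMeasurable f μI ∧
    IntegrableOn (fun x => ‖f x‖ * max (Real.log ‖f x‖) 0) (Set.Ioo (-1 : ℝ) 1)

/-- The distribution function `λ ↦ |{x ∈ (-1,1) : |f(x)| > λ}|`. -/
def distFun (f : ℝ → ℂ) (lam : ℝ) : ℝ :=
  (volume {x : ℝ | x ∈ Set.Ioo (-1 : ℝ) 1 ∧ lam < ‖f x‖}).toReal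

/-- The decreasing rearrangement `f*` of `f`, a function on `(0,2)`. -/
def decRearr (f : ℝ → ℂ) (t : ℝ) : ℝ :=
  sInf {lam : ℝ | 0 ≤ lam ∧ distFun f lam ≤ t}

/-- The `L log L` norm `‖f‖ = ∫_0^2 f*(t) log(2e/t) dt`. -/
def llogLNorm (f : ℝ → ℂ) : ℝ :=
  ∫ t in Set.Ioo (0 : ℝ) 2, decRearr f t * Real.log (2 * Real.exp 1 / t)

/-- The `L(log L)^α` norm `∫_0^2 f*(t) log^α(2e/t) dt` (for `α = 0` this is the `L¹` norm). -/
def zygNorm (α : ℝ) (f : ℝ → ℂ) : ℝ :=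
  ∫ t in Set.Ioo (0 : ℝ) 2, decRearr f t * Real.log (2 * Real.exp 1 / t) ^ α

/-- Membership in the Zygmund space `L(log L)^α(-1,1)`. -/
def MemZyg (α : ℝ) (f : ℝ → ℂ) : Prop :=
  AEStronglyMeasurable f μI ∧
    IntegrableOn (fun t => decRearr f t * Real.log (2 * Real.exp 1 / t) ^ α)
      (Set.Ioo (0 : ℝ) 2)

/-- Membership in `L(log L)²(-1,1)`: `∫ |f| (log(2+|f|))² < ∞`. -/
def MemLlogL2 (f : ℝ → ℂ) : Prop :=
  AEStronglyMeasurable f μI ∧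
    IntegrableOn (fun x => ‖f x‖ * Real.log (2 + ‖f x‖) ^ 2) (Set.Ioo (-1 : ℝ) 1)

/-- The constant `c(β,γ) = max{1/(1-β), 1/(1-γ), 1/(β+γ-1)}`. -/
def cBG (β γ : ℝ) : ℝ := max (max (1 / (1 - β)) (1 / (1 - γ))) (1 / (β + γ - 1))

section
set_option autoImplicit false
open MeasureTheory Set Filter

lemma zz_line_re (x b : ℝ) : ((x : ℂ) + b * Complex.I).re = x := by simp
lemma zz_line_im (x b : ℝ) : ((x : ℂ) + b * Complex.I).im = b := by simp

lemma zz_line_cont (G : ℂ → ℂ) {a b : ℝ} (hab : a < b)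
    (hG : DifferentiableOn ℂ G {z | a < z.im}) :
    Continuous (fun x : ℝ => G ((x : ℂ) + b * Complex.I)) := by
  have h1 : Continuous (fun x : ℝ => (x : ℂ) + b * Complex.I) := by fun_prop
  exact hG.continuousOn.comp_continuous h1 (fun x => by simp [hab])

lemma zz_line_bound (G : ℂ → ℂ) {a b C R : ℝ} (hab : a < b) (hC : 0 ≤ C)
    (hG : DifferentiableOn ℂ G {z | a < z.im})
    (hb : ∀ z : ℂ, b ≤ z.im → R ≤ ‖z‖ → ‖G z‖ ≤ C / ‖z‖ ^ 2) :
    ∃ D, ∀ x : ℝ, ‖G ((x : ℂ) + b * Complex.I)‖ ≤ D * (1 + x ^ 2)⁻¹ := by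
  have hc := zz_line_cont G hab hG
  obtain ⟨M, hM⟩ := (isCompact_Icc (a := -(max R 1)) (b := max R 1)).exists_bound_of_continuousOn
    hc.continuousOn
  refine ⟨max (M * (1 + (max R 1)^2)) (2 * C), fun x => ?_⟩
  by_cases hx : |x| ≤ max R 1
  · have h1 := hM x (abs_le.1 hx)
    have hM0 : 0 ≤ M := (norm_nonneg _).trans h1
    have h2 : x ^ 2 ≤ (max R 1)^2 := by
      rw [← sq_abs x]; gcongr
    calc _ ≤ M := h1
      _ = (M * (1 + x^2)) * (1 + x ^ 2)⁻¹ := by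
          have : (1 + x^2) ≠ 0 := by positivity
          field_simp
      _ ≤ _ := by
          gcongr
          refine le_trans ?_ (le_max_left _ _)
          gcongr
  · push Not at hx
    have hx1 : R < |x| := (le_max_left _ _).trans_lt hx
    have hx2 : 1 < |x| := (le_max_right _ _).trans_lt hx
    have hn : |x| ≤ ‖(x : ℂ) + b * Complex.I‖ := by
      have := Complex.abs_re_le_norm ((x : ℂ) + b * Complex.I)
      rwa [zz_line_re] at this
    have h := hb ((x : ℂ) + b * Complex.I) (by simp) (hx1.le.trans hn)
    have hx3 : 1 < x ^ 2 := by rw [← sq_abs]; nlinarith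
    have h2 : x^2 ≤ ‖(x : ℂ) + b * Complex.I‖^2 := by rw [← sq_abs x]; gcongr
    calc _ ≤ _ := h
      _ ≤ C / x^2 := by gcongr
      _ ≤ (2 * C) * (1 + x ^ 2)⁻¹ := by
        rw [← div_eq_mul_inv, div_le_div_iff₀ (by positivity) (by positivity)]
        nlinarith
      _ ≤ _ := by
        gcongr
        exact le_max_right _ _

lemma zz_line_integrable (G : ℂ → ℂ) {a b C R : ℝ} (hab : a < b) (hC : 0 ≤ C)
    (hG : DifferentiableOn ℂ G {z | a < z.im})
    (hb : ∀ z : ℂ, b ≤ z.im → R ≤ ‖z‖ → ‖G z‖ ≤ C / ‖z‖ ^ 2) :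
    Integrable (fun x : ℝ => G ((x : ℂ) + b * Complex.I)) := by
  obtain ⟨D, hD⟩ := zz_line_bound G hab hC hG hb
  refine Integrable.mono' (integrable_inv_one_add_sq.const_mul D)
    (zz_line_cont G hab hG).aestronglyMeasurable (Eventually.of_forall hD)

lemma zz_line_integral_zero (G : ℂ → ℂ) {a b C R : ℝ} (hab : a < b) (hC : 0 ≤ C)
    (hG : DifferentiableOn ℂ G {z | a < z.im})
    (hb : ∀ z : ℂ, b ≤ z.im → R ≤ ‖z‖ → ‖G z‖ ≤ C / ‖z‖ ^ 2) :
    ∫ x : ℝ, G ((x : ℂ) + b * Complex.I) = 0 := by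
  have hint := zz_line_integrable G hab hC hG hb
  have hn : Tendsto (fun n : ℕ => (n : ℝ)) atTop atTop := tendsto_natCast_atTop_atTop
  have h1 := intervalIntegral_tendsto_integral hint (tendsto_neg_atTop_atBot.comp hn) hn
  refine tendsto_nhds_unique h1 ?_
  rw [tendsto_zero_iff_norm_tendsto_zero]
  have hlim : Tendsto (fun n : ℕ => 6 * C / (n : ℝ)) atTop (nhds 0) :=
    hn.const_div_atTop _
  refine squeeze_zero' (Eventually.of_forall fun _ => norm_nonneg _) ?_ hlim
  filter_upwards [hn.eventually_ge_atTop (max (max R 1) (|b|+1))] with n hn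
  set r : ℝ := (n : ℝ)
  have hr1 : R ≤ r := (le_max_left _ _).trans ((le_max_left _ _).trans hn)
  have hr2 : 1 ≤ r := (le_max_right _ _).trans ((le_max_left _ _).trans hn)
  have hr3 : |b| + 1 ≤ r := (le_max_right _ _).trans hn
  have hb1 : -r ≤ b := by have := neg_abs_le b; linarith
  have hr0 : 0 < r := by linarith
  have hbound : ∀ z : ℂ, b ≤ z.im → r ≤ ‖z‖ → ‖G z‖ ≤ C / r^2 := fun z hz hz2 =>
    (hb z hz (hr1.trans hz2)).trans (by gcongr)
  have hbr : b < r := by have := le_abs_self b; linarith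
  have hrect := Complex.integral_boundary_rect_eq_zero_of_differentiableOn G
    ((-r : ℝ) + b * Complex.I) ((r : ℝ) + r * Complex.I) (by
      refine hG.mono fun z hz => ?_
      rw [Complex.mem_reProdIm] at hz
      have := hz.2
      rw [zz_line_im, zz_line_im, uIcc_of_le hbr.le] at this
      exact lt_of_lt_of_le hab this.1)
  simp only [zz_line_im, zz_line_re] at hrect
  have e1 : ‖∫ x in (-r)..r, G ((x : ℂ) + r * Complex.I)‖ ≤ C / r^2 * |r - (-r)| := by
    refine intervalIntegral.norm_integral_le_of_norm_le_const fun x hx => ?_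
    refine hbound _ (by simpa using hbr.le) ?_
    have := Complex.abs_im_le_norm ((x : ℂ) + r * Complex.I)
    rw [zz_line_im] at this
    exact (le_abs_self _).trans this
  have e2 : ‖∫ y in b..r, G ((r : ℂ) + y * Complex.I)‖ ≤ C / r^2 * |r - b| := by
    refine intervalIntegral.norm_integral_le_of_norm_le_const fun x hx => ?_
    rw [uIoc_of_le hbr.le] at hx
    refine hbound _ (by simpa using hx.1.le) ?_
    have := Complex.abs_re_le_norm ((r : ℂ) + x * Complex.I)
    rw [zz_line_re] at this
    exact (le_abs_self _).trans this
  have e3 : ‖∫ y in b..r, G (((-r : ℝ) : ℂ) + y * Complex.I)‖ ≤ C / r^2 * |r - b| := by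
    refine intervalIntegral.norm_integral_le_of_norm_le_const fun x hx => ?_
    rw [uIoc_of_le hbr.le] at hx
    refine hbound _ (by simpa using hx.1.le) ?_
    have := Complex.abs_re_le_norm (((-r : ℝ) : ℂ) + x * Complex.I)
    rw [zz_line_re, abs_neg] at this
    exact (le_abs_self _).trans this
  have e4 : |r - b| ≤ 2 * r := by rw [abs_le]; constructor <;> linarith
  have e5 : |r - (-r)| = 2 * r := by rw [abs_of_nonneg] <;> linarith
  have : (∫ x in (-r)..r, G ((x : ℂ) + b * Complex.I)) =
     (∫ x in (-r)..r, G ((x : ℂ) + r * Complex.I)) -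
      Complex.I * (∫ y in b..r, G ((r : ℂ) + y * Complex.I)) +
      Complex.I * (∫ y in b..r, G (((-r : ℝ) : ℂ) + y * Complex.I)) := by
    simp only [smul_eq_mul] at hrect
    linear_combination hrect
  have h6 : ‖∫ x in (-r)..r, G ((x : ℂ) + b * Complex.I)‖ ≤ 6 * C / r := by
    rw [this]
    have hq : C / r^2 * |r - b| ≤ C / r ^ 2 * (2 * r) := by gcongr
    have hq2 : C / r ^ 2 * (2 * r) = 2 * C / r := by field_simp
    have hq3 : 6 * C / r = 3 * (2 * C / r) := by ring
    rw [e5] at e1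
    refine (norm_add_le _ _).trans ?_
    refine (add_le_add_left (norm_sub_le _ _) _).trans ?_
    rw [norm_mul, norm_mul, Complex.norm_I, one_mul, one_mul]
    linarith
  exact h6

/-- Cauchy transform -/
def zzF (h : ℝ → ℂ) (z : ℂ) : ℂ := ∫ y, h y / (z - y)

lemma zz_sub_ge_im (z : ℂ) (y : ℝ) : |z.im| ≤ ‖z - y‖ := by
  have := Complex.abs_im_le_norm (z - y)
  simpa using this

lemma zz_sub_ne {z : ℂ} (hz : 0 < z.im) (y : ℝ) : z - y ≠ 0 := by
  have := zz_sub_ge_im z y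
  rw [abs_of_pos hz] at this
  exact norm_pos_iff.1 (hz.trans_le this)

lemma zz_kernel_meas (z : ℂ) : Measurable (fun y : ℝ => (z - y)⁻¹) := by fun_prop

lemma zzF_integrable {h : ℝ → ℂ} (hi : Integrable h) {z : ℂ} (hz : 0 < z.im) :
    Integrable (fun y : ℝ => h y / (z - y)) := by
  simp only [div_eq_mul_inv]
  refine hi.mul_bdd (c := (z.im)⁻¹) (zz_kernel_meas z).aestronglyMeasurable
    (Eventually.of_forall fun y => ?_)
  rw [norm_inv]
  have := zz_sub_ge_im z y
  rw [abs_of_pos hz] at this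
  gcongr

lemma zzF_diff {h : ℝ → ℂ} (hi : Integrable h) : DifferentiableOn ℂ (zzF h) {z | 0 < z.im} := by
  intro z hz
  have hz' : 0 < z.im := hz
  have hs : {w : ℂ | z.im / 2 < w.im} ∈ nhds z :=
    (isOpen_lt continuous_const Complex.continuous_im).mem_nhds (by simp only [mem_ofPred_eq]; linarith)
  have key := hasDerivAt_integral_of_dominated_loc_of_deriv_le (μ := volume)
    (F := fun (w : ℂ) (y : ℝ) => h y / (w - y)) (F' := fun (w : ℂ) (y : ℝ) => h y * (-1 / (w - y)^2))
    (bound := fun y => ‖h y‖ * ((z.im / 2)^2)⁻¹) (x₀ := z) hs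
    (Eventually.of_forall fun w => by
      simp only [div_eq_mul_inv]
      exact hi.1.mul (zz_kernel_meas w).aestronglyMeasurable)
    (zzF_integrable hi hz')
    (hi.1.mul (by
      have : Measurable (fun y : ℝ => (-1 : ℂ) / (z - y)^2) := by fun_prop
      exact this.aestronglyMeasurable))
    (Eventually.of_forall fun y w hw => by
      simp only [mem_ofPred_eq] at hw
      have := zz_sub_ge_im w y
      rw [abs_of_pos (by linarith)] at this
      rw [norm_mul, norm_div, norm_neg, norm_one, norm_pow, one_div]
      gcongr
      linarith)
    (hi.norm.mul_const _)
    (Eventually.of_forall fun y w hw => by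
      simp only [mem_ofPred_eq] at hw
      have h0 : w - y ≠ 0 := zz_sub_ne (by linarith) y
      have h1 : HasDerivAt (fun w : ℂ => w - y) 1 w := (hasDerivAt_id w).sub_const _
      have h2 := (h1.fun_inv h0).const_mul (h y)
      simpa only [div_eq_mul_inv] using h2)
  exact key.2.differentiableAt.differentiableWithinAt

lemma zzF_norm_le {h : ℝ → ℂ} (hi : Integrable h) {z : ℂ} {c : ℝ} (hc : 0 < c)
    (hz : ∀ y : ℝ, h y ≠ 0 → c ≤ ‖z - y‖) : ‖zzF h z‖ ≤ (∫ y, ‖h y‖) / c := by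
  unfold zzF
  rw [div_eq_mul_inv, ← integral_mul_const]
  refine norm_integral_le_of_norm_le (hi.norm.mul_const _) (Eventually.of_forall fun y => ?_)
  rw [norm_div, div_eq_mul_inv]
  by_cases hy : h y = 0
  · simp [hy]
  · gcongr
    exact hz y hy

lemma zz_supp_norm {h : ℝ → ℂ} (hs : ∀ y, y ∉ Ioo (-1 : ℝ) 1 → h y = 0) {z : ℂ} (y : ℝ)
    (hy : h y ≠ 0) : ‖z‖ - 1 ≤ ‖z - y‖ := by
  have h1 : y ∈ Ioo (-1 : ℝ) 1 := by
    by_contra h2; exact hy (hs y h2)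
  have h2 : ‖(y : ℂ)‖ ≤ 1 := by
    rw [Complex.norm_real, Real.norm_eq_abs, abs_le]; exact ⟨h1.1.le, h1.2.le⟩
  have := norm_sub_norm_le z (y : ℂ)
  linarith

/-- decay on `im ≥ b`. -/
lemma zzF_decay {h : ℝ → ℂ} (hi : Integrable h) (hs : ∀ y, y ∉ Ioo (-1 : ℝ) 1 → h y = 0)
    {z : ℂ} (hz : 2 ≤ ‖z‖) : ‖zzF h z‖ ≤ 2 * (∫ y, ‖h y‖) / ‖z‖ := by
  have h0 : 0 ≤ ∫ y, ‖h y‖ := integral_nonneg fun y => norm_nonneg _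
  refine (zzF_norm_le hi (c := ‖z‖ - 1) (by linarith) (fun y hy => zz_supp_norm hs y hy)).trans ?_
  rw [div_le_div_iff₀ (by linarith) (by linarith)]
  nlinarith

lemma zz_pow_sub (a b : ℂ) (r : ℝ) (ha : ‖a‖ ≤ r) (hb : ‖b‖ ≤ r) (n : ℕ) :
    r * ‖a ^ n - b ^ n‖ ≤ n * r ^ n * ‖a - b‖ := by
  have hr : 0 ≤ r := (norm_nonneg _).trans ha
  induction n with
  | zero => simp
  | succ n ih =>
    have : a ^ (n+1) - b ^ (n+1) = a * (a^n - b^n) + (a - b) * b ^ n := by ring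
    rw [this]
    have h1 : ‖a * (a^n - b^n) + (a - b) * b ^ n‖ ≤ r * ‖a^n - b^n‖ + ‖a - b‖ * r^n := by
      refine (norm_add_le _ _).trans ?_
      rw [norm_mul, norm_mul, norm_pow]
      gcongr
    calc _ ≤ r * (r * ‖a^n - b^n‖ + ‖a - b‖ * r^n) := by gcongr
      _ ≤ r * (n * r ^ n * ‖a - b‖ + ‖a - b‖ * r^n) := by gcongr
      _ = _ := by push_cast; ring

lemma zz_elem (w : ℂ) (k : ℕ) (hk : 1 ≤ k) :
    ‖w‖ ^ (2 * k) ≤ (8 * k) ^ (2 * k) * |w.im| ^ (2 * k) + 2 * (w ^ (2 * k)).re := by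
  have hk' : (1 : ℝ) ≤ k := by exact_mod_cast hk
  by_cases hw : ‖w‖ = 0
  · have : w = 0 := norm_eq_zero.1 hw
    subst this
    have : 2 * k ≠ 0 := by omega
    simp [this]
  have hw0 : 0 < ‖w‖ := lt_of_le_of_ne (norm_nonneg _) (Ne.symm hw)
  by_cases h : ‖w‖ ≤ 4 * k * |w.im|
  · have h1 : 2 * ‖w‖ ≤ (8 * k) * |w.im| := by linarith
    have h2 : (2 * ‖w‖) ^ (2 * k) ≤ ((8 * k) * |w.im|) ^ (2 * k) := by gcongr
    rw [mul_pow, mul_pow] at h2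
    have h3 : (4 : ℝ) ≤ 2 ^ (2 * k) := by
      calc (4 : ℝ) = 2 ^ (2 * 1) := by norm_num
        _ ≤ _ := by gcongr; norm_num
    have h4 : -‖w‖ ^ (2 * k) ≤ (w ^ (2 * k)).re := by
      rw [← norm_pow]
      have := Complex.abs_re_le_norm (w ^ (2*k))
      exact (abs_le.1 this).1
    have h5 : 4 * ‖w‖ ^ (2 * k) ≤ 2 ^ (2 * k) * ‖w‖ ^ (2 * k) := by gcongr
    have h6 : 0 ≤ ‖w‖ ^ (2 * k) := by positivity
    linarith
  · push Not at h
    have h1 := zz_pow_sub (w ^ 2) ((‖w‖ : ℂ) ^ 2) (‖w‖ ^ 2) (by simp) (by simp) k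
    have h2 : ‖w ^ 2 - (‖w‖ : ℂ) ^ 2‖ = 2 * ‖w‖ * |w.im| := by
      have : w ^ 2 - (‖w‖ : ℂ) ^ 2 = w * (w - (starRingEnd ℂ) w) := by
        rw [mul_sub, Complex.mul_conj, Complex.normSq_eq_norm_sq]; push_cast; ring
      rw [this, norm_mul, Complex.sub_conj]
      simp; ring
    rw [h2] at h1
    have h3 : ‖(w ^ 2) ^ k - ((‖w‖ : ℂ) ^ 2) ^ k‖ ≤ ‖w‖ ^ (2 * k) / 2 := by
      rw [← mul_le_mul_iff_right₀ (show 0 < ‖w‖ ^ 2 by positivity)]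
      refine h1.trans ?_
      rw [← pow_mul]
      have : ‖w‖ * (4 * k * |w.im|) ≤ ‖w‖ * ‖w‖ := by gcongr
      have h7 : 0 ≤ ‖w‖ ^ (2 * k) := by positivity
      nlinarith
    rw [← pow_mul, ← pow_mul] at h3
    have h4 := (abs_le.1 ((Complex.abs_re_le_norm _).trans h3)).1
    have h5 : ((‖w‖ : ℂ) ^ (2 * k)).re = ‖w‖ ^ (2 * k) := by
      rw [← Complex.ofReal_pow, Complex.ofReal_re]
    rw [Complex.sub_re, h5] at h4
    have h6 : 0 ≤ (8 * (k : ℝ)) ^ (2 * k) * |w.im| ^ (2 * k) := by positivity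
    linarith

lemma zzF_pow_integrable {h : ℝ → ℂ} (hi : Integrable h)
    (hs : ∀ y, y ∉ Ioo (-1 : ℝ) 1 → h y = 0) {δ : ℝ} (hδ : 0 < δ) (k : ℕ) (hk : 1 ≤ k) :
    Integrable (fun x : ℝ => zzF h (x + δ * Complex.I) ^ (2 * k)) ∧
    ∫ x : ℝ, zzF h (x + δ * Complex.I) ^ (2 * k) = 0 := by
  have h0 : 0 ≤ ∫ y, ‖h y‖ := integral_nonneg fun y => norm_nonneg _
  set A := 2 * ∫ y, ‖h y‖
  have hA : 0 ≤ A := by positivity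
  have hd : DifferentiableOn ℂ (fun z => zzF h z ^ (2 * k)) {z | 0 < z.im} := (zzF_diff hi).pow _
  have hb : ∀ z : ℂ, δ ≤ z.im → 2 ≤ ‖z‖ → ‖zzF h z ^ (2 * k)‖ ≤ A ^ (2 * k) / ‖z‖ ^ 2 := by
    intro z _ hz
    rw [norm_pow]
    have := zzF_decay hi hs hz
    calc _ ≤ (A / ‖z‖) ^ (2 * k) := by gcongr
      _ = A ^ (2 * k) / ‖z‖ ^ (2 * k) := div_pow _ _ _
      _ ≤ _ := by
        gcongr
        · linarith
        · omega
  exact ⟨zz_line_integrable _ hδ (by positivity) hd hb,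
    zz_line_integral_zero _ hδ (by positivity) hd hb⟩

lemma zzF_pow_le {h : ℝ → ℂ} (hi : Integrable h)
    (hs : ∀ y, y ∉ Ioo (-1 : ℝ) 1 → h y = 0) {δ : ℝ} (hδ : 0 < δ) (k : ℕ) (hk : 1 ≤ k) :
    ∫⁻ x : ℝ, ‖zzF h (x + δ * Complex.I)‖ₑ ^ (2 * k) ≤
     (ENNReal.ofReal (8 * k)) ^ (2 * k) *
      ∫⁻ x : ℝ, ENNReal.ofReal |(zzF h (x + δ * Complex.I)).im| ^ (2 * k) := by
  obtain ⟨h1, h2⟩ := zzF_pow_integrable hi hs hδ k hk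
  have hc : Continuous (fun x : ℝ => zzF h (x + δ * Complex.I)) :=
    zz_line_cont _ hδ (zzF_diff hi)
  have hI : Integrable (fun x : ℝ => |(zzF h (x + δ * Complex.I)).im| ^ (2 * k)) := by
    refine h1.norm.mono' ?_ (Eventually.of_forall fun x => ?_)
    · exact ((Complex.continuous_im.comp hc).abs.pow _).aestronglyMeasurable
    · rw [Real.norm_eq_abs, abs_pow, abs_abs, norm_pow]
      gcongr
      exact Complex.abs_im_le_norm _
  have h3 : ∫ x : ℝ, ‖zzF h (x + δ * Complex.I)‖ ^ (2 * k) ≤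
      (8 * k) ^ (2 * k) * ∫ x : ℝ, |(zzF h (x + δ * Complex.I)).im| ^ (2 * k) := by
    have hre : ∫ x : ℝ, (zzF h (x + δ * Complex.I) ^ (2 * k)).re = 0 := by
      have := integral_re h1
      simp only [RCLike.re_to_complex] at this
      rw [this, h2]; simp
    have hn : Integrable (fun x : ℝ => ‖zzF h (x + δ * Complex.I)‖ ^ (2 * k)) := by
      simpa only [norm_pow] using h1.norm
    calc _ ≤ ∫ x : ℝ, ((8 * k : ℝ) ^ (2 * k) * |(zzF h (x + δ * Complex.I)).im| ^ (2 * k) +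
            2 * (zzF h (x + δ * Complex.I) ^ (2 * k)).re) := by
          refine integral_mono hn ((hI.const_mul _).add (h1.re.const_mul 2)) fun x => ?_
          exact zz_elem _ k hk
      _ = _ := by
          have h5 := h1.re
          simp only [RCLike.re_to_complex] at h5
          rw [integral_add (hI.const_mul _) (h5.const_mul 2), integral_const_mul,
            integral_const_mul, hre]
          simp
  have hn : Integrable (fun x : ℝ => ‖zzF h (x + δ * Complex.I)‖ ^ (2 * k)) := by
    simpa only [norm_pow] using h1.norm
  have h4 := ENNReal.ofReal_le_ofReal h3
  rw [ENNReal.ofReal_mul (by positivity),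
    ofReal_integral_eq_lintegral_ofReal hn (Eventually.of_forall fun x => by positivity),
    ofReal_integral_eq_lintegral_ofReal hI (Eventually.of_forall fun x => by positivity),
    ENNReal.ofReal_pow (by positivity)] at h4
  simp only [ENNReal.ofReal_pow (norm_nonneg _), ofReal_norm,
    ENNReal.ofReal_pow (abs_nonneg _)] at h4
  exact h4

/-- Hölder against the constant one. -/
lemma zz_holder {α : Type*} [MeasurableSpace α] (μ : Measure α) {H : α → ENNReal}
    (hH : AEMeasurable H μ) (n : ℕ) (hn : 2 ≤ n) :
    (∫⁻ a, H a ∂μ) ^ n ≤ μ univ ^ (n - 1) * ∫⁻ a, H a ^ n ∂μ := by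
  have hn' : (2 : ℝ) ≤ n := by exact_mod_cast hn
  have hpq : (n : ℝ).HolderConjugate (n / (n - 1)) := Real.HolderConjugate.conjExponent (by linarith)
  have h := ENNReal.lintegral_mul_le_Lp_mul_Lq μ hpq hH (aemeasurable_const (b := (1 : ENNReal)))
  simp only [Pi.mul_apply, mul_one, ENNReal.one_rpow, lintegral_const, one_mul,
    ENNReal.rpow_natCast] at h
  have h2 : (∫⁻ a, H a ∂μ) ^ n ≤ ((∫⁻ a, H a ^ n ∂μ) ^ (1 / (n : ℝ)) *
    (μ univ) ^ (1 / ((n : ℝ) / (n - 1)))) ^ n := by gcongr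
  refine h2.trans (le_of_eq ?_)
  rw [mul_pow, ← ENNReal.rpow_natCast, ← ENNReal.rpow_natCast, ← ENNReal.rpow_mul,
    ← ENNReal.rpow_mul, mul_comm]
  have e1 : (1 / (n : ℝ)) * n = 1 := by field_simp
  have e2 : (1 / ((n : ℝ) / (n - 1))) * n = ((n - 1 : ℕ) : ℝ) := by
    rw [Nat.cast_sub (by omega)]
    have : (n : ℝ) - 1 ≠ 0 := by linarith
    push_cast
    field_simp
  rw [e1, e2, ENNReal.rpow_one, ENNReal.rpow_natCast]

lemma zz_poisson_int {δ : ℝ} (hδ : 0 < δ) :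
    Integrable (fun s : ℝ => δ / (s ^ 2 + δ ^ 2)) ∧ ∫ s : ℝ, δ / (s ^ 2 + δ ^ 2) = Real.pi := by
  have e : (fun s : ℝ => δ / (s ^ 2 + δ ^ 2)) = fun s => δ⁻¹ * (1 + (δ⁻¹ * s) ^ 2)⁻¹ := by
    ext s
    field_simp
    ring
  have hi : Integrable (fun s : ℝ => (1 + (δ⁻¹ * s) ^ 2)⁻¹) :=
    integrable_inv_one_add_sq.comp_mul_left' (inv_ne_zero hδ.ne')
  refine ⟨by rw [e]; exact hi.const_mul _, ?_⟩
  rw [e, integral_const_mul, Measure.integral_comp_mul_left (fun u : ℝ => (1 + u ^ 2)⁻¹),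
    integral_univ_inv_one_add_sq, inv_inv, abs_of_pos hδ, smul_eq_mul]
  field_simp

lemma zz_poisson_lint {δ : ℝ} (hδ : 0 < δ) :
    ∫⁻ s : ℝ, ENNReal.ofReal (δ / (s ^ 2 + δ ^ 2)) = ENNReal.ofReal Real.pi := by
  rw [← ofReal_integral_eq_lintegral_ofReal (zz_poisson_int hδ).1
    (Eventually.of_forall fun x => by positivity), (zz_poisson_int hδ).2]

lemma zz_kernel_im (x δ y : ℝ) :
    (((x : ℂ) + δ * Complex.I - y)⁻¹).im = - (δ / ((x - y) ^ 2 + δ ^ 2)) := by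
  rw [Complex.inv_im, Complex.normSq_apply]
  simp
  ring

lemma zzF_im_le {h : ℝ → ℂ} (hi : Integrable h) (hr : ∀ y, (h y).im = 0) {δ : ℝ} (hδ : 0 < δ)
    (x : ℝ) : ENNReal.ofReal |(zzF h (x + δ * Complex.I)).im| ≤
      ∫⁻ y, ‖h y‖ₑ * ENNReal.ofReal (δ / ((x - y) ^ 2 + δ ^ 2)) := by
  have h1 := zzF_integrable hi (z := x + δ * Complex.I) (by simpa using hδ)
  have h2 : (zzF h (x + δ * Complex.I)).im = ∫ y, (h y / (x + δ * Complex.I - y)).im := by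
    have := integral_im h1
    simp only [RCLike.im_to_complex] at this
    rw [this]; rfl
  rw [h2, ← Real.enorm_eq_ofReal_abs]
  refine (enorm_integral_le_lintegral_enorm _).trans (lintegral_mono fun y => ?_)
  rw [div_eq_mul_inv, Complex.mul_im, hr, zero_mul, add_zero, zz_kernel_im, enorm_mul, enorm_neg,
    Real.enorm_eq_ofReal (r := δ / ((x - y) ^ 2 + δ ^ 2)) (by positivity)]
  gcongr
  rw [← ofReal_norm, ← ofReal_norm]
  exact ENNReal.ofReal_le_ofReal (by simpa using Complex.abs_re_le_norm (h y))

lemma zzF_im_pow {h : ℝ → ℂ} (hi : Integrable h) (hr : ∀ y, (h y).im = 0) {δ : ℝ} (hδ : 0 < δ)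
    (n : ℕ) (hn : 2 ≤ n) :
    ∫⁻ x : ℝ, ENNReal.ofReal |(zzF h (x + δ * Complex.I)).im| ^ n ≤
      ENNReal.ofReal Real.pi ^ n * ∫⁻ y, ‖h y‖ₑ ^ n := by
  have hpm : Measurable (fun p : ℝ × ℝ => ENNReal.ofReal (δ / ((p.1 - p.2) ^ 2 + δ ^ 2))) := by
    fun_prop
  have hp1 : ∀ x, Measurable (fun y : ℝ => ENNReal.ofReal (δ / ((x - y) ^ 2 + δ ^ 2))) := by
    intro x; fun_prop
  have hmass1 : ∀ x, ∫⁻ y, ENNReal.ofReal (δ / ((x - y) ^ 2 + δ ^ 2)) = ENNReal.ofReal Real.pi := by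
    intro x
    rw [lintegral_sub_left_eq_self (fun s => ENNReal.ofReal (δ / (s ^ 2 + δ ^ 2))) x]
    exact zz_poisson_lint hδ
  have hmass2 : ∀ y, ∫⁻ x, ENNReal.ofReal (δ / ((x - y) ^ 2 + δ ^ 2)) = ENNReal.ofReal Real.pi := by
    intro y
    rw [lintegral_sub_right_eq_self (fun s => ENNReal.ofReal (δ / (s ^ 2 + δ ^ 2))) y]
    exact zz_poisson_lint hδ
  have hhm : AEMeasurable (fun y => ‖h y‖ₑ) volume := hi.1.enorm
  have step : ∀ x : ℝ, ENNReal.ofReal |(zzF h (x + δ * Complex.I)).im| ^ n ≤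
      ENNReal.ofReal Real.pi ^ (n - 1) *
        ∫⁻ y, ‖h y‖ₑ ^ n * ENNReal.ofReal (δ / ((x - y) ^ 2 + δ ^ 2)) := by
    intro x
    have h1 := zzF_im_le hi hr hδ x
    have h2 := zz_holder (volume.withDensity (fun y : ℝ => ENNReal.ofReal (δ / ((x - y) ^ 2 + δ ^ 2))))
      (hhm.mono_ac (withDensity_absolutelyContinuous _ _)) n hn
    rw [withDensity_apply _ MeasurableSet.univ, Measure.restrict_univ, hmass1,
      lintegral_withDensity_eq_lintegral_mul₀ (hp1 x).aemeasurable hhm,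
      lintegral_withDensity_eq_lintegral_mul₀ (hp1 x).aemeasurable (hhm.pow_const n)] at h2
    simp only [Pi.mul_apply] at h2
    calc _ ≤ _ := pow_le_pow_left' h1 n
      _ ≤ _ := by simpa only [mul_comm] using h2
  calc _ ≤ ∫⁻ x : ℝ, ENNReal.ofReal Real.pi ^ (n - 1) *
        ∫⁻ y, ‖h y‖ₑ ^ n * ENNReal.ofReal (δ / ((x - y) ^ 2 + δ ^ 2)) := lintegral_mono step
    _ = ENNReal.ofReal Real.pi ^ (n - 1) *
        ∫⁻ x : ℝ, ∫⁻ y, ‖h y‖ₑ ^ n * ENNReal.ofReal (δ / ((x - y) ^ 2 + δ ^ 2)) := by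
        rw [lintegral_const_mul' _ _ (by simp)]
    _ = ENNReal.ofReal Real.pi ^ (n - 1) *
        ∫⁻ y : ℝ, ∫⁻ x, ‖h y‖ₑ ^ n * ENNReal.ofReal (δ / ((x - y) ^ 2 + δ ^ 2)) := by
        rw [lintegral_lintegral_swap]
        exact (hhm.pow_const n).comp_snd.mul hpm.aemeasurable
    _ = ENNReal.ofReal Real.pi ^ (n - 1) * ∫⁻ y : ℝ, ‖h y‖ₑ ^ n * ENNReal.ofReal Real.pi := by
        congr 2; ext y
        rw [lintegral_const_mul _ (by fun_prop), hmass2]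
    _ = _ := by
        rw [lintegral_mul_const' _ _ (by simp)]
        obtain ⟨m, rfl⟩ : ∃ m, n = m + 1 := ⟨n - 1, by omega⟩
        simp only [add_tsub_cancel_right, pow_succ]
        ring

/-- Key `L^{2k}` bound. -/
lemma zzF_Lp {h : ℝ → ℂ} (hi : Integrable h) (hr : ∀ y, (h y).im = 0)
    (hs : ∀ y, y ∉ Ioo (-1 : ℝ) 1 → h y = 0) {δ : ℝ} (hδ : 0 < δ) (k : ℕ) (hk : 1 ≤ k) :
    ∫⁻ x : ℝ, ‖zzF h (x + δ * Complex.I)‖ₑ ^ (2 * k) ≤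
     (ENNReal.ofReal (8 * k * Real.pi)) ^ (2 * k) * ∫⁻ y, ‖h y‖ₑ ^ (2 * k) := by
  refine (zzF_pow_le hi hs hδ k hk).trans ?_
  rw [ENNReal.ofReal_mul (p := 8 * (k : ℝ)) (q := Real.pi) (by positivity), mul_pow, mul_assoc]
  gcongr
  exact zzF_im_pow hi hr hδ (2 * k) (by omega)

/-- log weight -/
def zzL (s : ℝ) : ℝ := Real.log (2 * Real.exp 1 / s)

lemma zzL_ge_one {s : ℝ} (h0 : 0 < s) (h2 : s ≤ 2) : 1 ≤ zzL s := by
  unfold zzL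
  rw [Real.le_log_iff_exp_le (by positivity), le_div_iff₀ h0]
  nlinarith [Real.exp_pos 1]

lemma zzL_anti {s t : ℝ} (h0 : 0 < s) (h2 : s ≤ t) : zzL t ≤ zzL s := by
  unfold zzL
  have : 0 < t := h0.trans_le h2
  apply Real.log_le_log (by positivity)
  gcongr

lemma zzL_pow_anti {s t α : ℝ} (hα : 0 ≤ α) (h0 : 0 < s) (hst : s ≤ t) (h2 : t ≤ 2) :
    zzL t ^ α ≤ zzL s ^ α :=
  Real.rpow_le_rpow (by linarith [zzL_ge_one (h0.trans_le hst) h2]) (zzL_anti h0 hst) hα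

lemma zzL_pow_ge_one {s α : ℝ} (hα : 0 ≤ α) (h0 : 0 < s) (h2 : s ≤ 2) :
    1 ≤ zzL s ^ α := Real.one_le_rpow (zzL_ge_one h0 h2) hα

lemma zzL_meas : Measurable zzL := by unfold zzL; fun_prop

instance : IsFiniteMeasure μI := by unfold μI; infer_instance

lemma zz_distFun_eq (f : ℝ → ℂ) (t : ℝ) : distFun f t = (μI {x | t < ‖f x‖}).toReal := by
  unfold distFun μI
  rw [Measure.restrict_apply' measurableSet_Ioo]
  congr 2
  ext x; simp [and_comm]

lemma zz_distFun_ofReal (f : ℝ → ℂ) (t : ℝ) : ENNReal.ofReal (distFun f t) = μI {x | t < ‖f x‖} := by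
  rw [zz_distFun_eq, ENNReal.ofReal_toReal (by finiteness)]

lemma zz_distFun_nonneg (f : ℝ → ℂ) (t : ℝ) : 0 ≤ distFun f t := ENNReal.toReal_nonneg

lemma zz_μI_univ : μI univ = 2 := by
  unfold μI
  rw [Measure.restrict_apply_univ, Real.volume_Ioo]
  norm_num

lemma zz_distFun_le (f : ℝ → ℂ) (t : ℝ) : distFun f t ≤ 2 := by
  rw [zz_distFun_eq]
  have : μI {x | t < ‖f x‖} ≤ 2 := zz_μI_univ ▸ measure_mono (subset_univ _)
  have := ENNReal.toReal_mono (by simp) this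
  simpa using this

lemma zz_distFun_anti (f : ℝ → ℂ) : Antitone (distFun f) := by
  intro a b hab
  rw [zz_distFun_eq, zz_distFun_eq]
  refine ENNReal.toReal_mono (by finiteness) (measure_mono fun x hx => ?_)
  exact lt_of_le_of_lt hab hx

lemma zz_distFun_tendsto {f : ℝ → ℂ} (hf : AEStronglyMeasurable f μI) {t : ℝ} (ht : 0 < t) :
    ∃ l : ℝ, 0 ≤ l ∧ distFun f l ≤ t := by
  have h := tendsto_measure_iInter_atTop (μ := μI) (s := fun n : ℕ => {x | (n : ℝ) < ‖f x‖})
    (fun n => nullMeasurableSet_lt aemeasurable_const hf.norm.aemeasurable)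
    (fun a b hab x hx => by
      have : (a : ℝ) ≤ b := by exact_mod_cast hab
      exact lt_of_le_of_lt this hx) ⟨0, by finiteness⟩
  have he : (⋂ n : ℕ, {x | (n : ℝ) < ‖f x‖}) = ∅ := by
    ext x
    simp only [mem_iInter, mem_ofPred_eq, mem_empty_iff_false, iff_false, not_forall, not_lt]
    exact exists_nat_ge _
  rw [he, measure_empty] at h
  obtain ⟨n, hn⟩ := (h.eventually_lt_const (u := ENNReal.ofReal t) (by simpa using ht)).exists
  refine ⟨n, by positivity, ?_⟩
  rw [zz_distFun_eq]
  exact ENNReal.toReal_le_of_le_ofReal ht.le hn.le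

lemma zz_decRearr_nonneg (f : ℝ → ℂ) (t : ℝ) : 0 ≤ decRearr f t :=
  Real.sInf_nonneg fun _ hx => hx.1

lemma zz_decRearr_vol {f : ℝ → ℂ} (hf : AEStronglyMeasurable f μI) {t : ℝ} (ht : 0 < t) :
    ENNReal.ofReal (decRearr f t) = volume (Ioi (0:ℝ) ∩ {l | t < distFun f l}) := by
  have hbdd : BddBelow {lam : ℝ | 0 ≤ lam ∧ distFun f lam ≤ t} := ⟨0, fun x hx => hx.1⟩
  apply le_antisymm
  · have : Ioo 0 (decRearr f t) ⊆ Ioi (0:ℝ) ∩ {l | t < distFun f l} := by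
      intro l hl
      refine ⟨hl.1, ?_⟩
      by_contra hn
      simp only [mem_ofPred_eq, not_lt] at hn
      exact absurd (csInf_le hbdd ⟨hl.1.le, hn⟩) (not_le.2 hl.2)
    have := measure_mono (μ := volume) this
    rwa [Real.volume_Ioo, sub_zero] at this
  · have : Ioi (0:ℝ) ∩ {l | t < distFun f l} ⊆ Ioc 0 (decRearr f t) := by
      rintro l ⟨hl, hl2⟩
      refine ⟨hl, le_csInf (zz_distFun_tendsto hf ht) fun m hm => ?_⟩
      by_contra hn
      push Not at hn
      exact absurd ((zz_distFun_anti f hn.le).trans hm.2) (not_le.2 hl2)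
    have := measure_mono (μ := volume) this
    rwa [Real.volume_Ioc, sub_zero] at this

/-- the norm as an extended number -/
def zzN (α : ℝ) (f : ℝ → ℂ) : ENNReal :=
  ∫⁻ t in Ioo (0:ℝ) 2, ENNReal.ofReal (decRearr f t * zzL t ^ α)

/-- the distributional quantity -/
def zzD (α : ℝ) (f : ℝ → ℂ) : ENNReal :=
  ∫⁻ l in Ioi (0:ℝ), ENNReal.ofReal (distFun f l * zzL (distFun f l) ^ α)

lemma zzN_eq {f : ℝ → ℂ} (hf : AEStronglyMeasurable f μI) (α : ℝ) :
    zzN α f = ∫⁻ l in Ioi (0:ℝ), ∫⁻ t in Ioo (0:ℝ) (distFun f l), ENNReal.ofReal (zzL t ^ α) := by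
  have hdm : Measurable (distFun f) := (zz_distFun_anti f).measurable
  have hL : Measurable (fun t => ENNReal.ofReal (zzL t ^ α)) := by
    have := zzL_meas; fun_prop
  have hS : MeasurableSet {p : ℝ × ℝ | p.1 < distFun f p.2} :=
    measurableSet_lt measurable_fst (hdm.comp measurable_snd)
  have h1 : zzN α f = ∫⁻ t in Ioo (0:ℝ) 2, ∫⁻ l in Ioi (0:ℝ),
      ({p : ℝ × ℝ | p.1 < distFun f p.2}.indicator (fun p => ENNReal.ofReal (zzL p.1 ^ α))) (t, l) := by
    unfold zzN
    refine setLIntegral_congr_fun measurableSet_Ioo fun t ht => ?_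
    have hL0 : 0 ≤ zzL t ^ α := Real.rpow_nonneg (by linarith [zzL_ge_one ht.1 ht.2.le]) _
    have : ∀ l, ({p : ℝ × ℝ | p.1 < distFun f p.2}.indicator
        (fun p => ENNReal.ofReal (zzL p.1 ^ α))) (t, l) =
        {l | t < distFun f l}.indicator (fun _ => ENNReal.ofReal (zzL t ^ α)) l := by
      intro l
      by_cases h : t < distFun f l <;> simp [indicator, h]
    simp only [this]
    rw [lintegral_indicator (measurableSet_lt measurable_const hdm), setLIntegral_const,
      Measure.restrict_apply' measurableSet_Ioi, ENNReal.ofReal_mul' hL0, zz_decRearr_vol hf ht.1,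
      mul_comm, inter_comm]
  rw [h1, lintegral_lintegral_swap]
  · refine setLIntegral_congr_fun measurableSet_Ioi fun l hl => ?_
    have : ∀ t, ({p : ℝ × ℝ | p.1 < distFun f p.2}.indicator
        (fun p => ENNReal.ofReal (zzL p.1 ^ α))) (t, l) =
        (Iio (distFun f l)).indicator (fun t => ENNReal.ofReal (zzL t ^ α)) t := by
      intro t
      by_cases h : t < distFun f l <;> simp [indicator, h]
    simp only [this]
    rw [lintegral_indicator measurableSet_Iio, Measure.restrict_restrict measurableSet_Iio]
    congr 2
    ext t
    have := zz_distFun_le f l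
    simp only [mem_inter_iff, mem_Iio, mem_Ioo]
    constructor
    · rintro ⟨a, b, c⟩; exact ⟨b, a⟩
    · rintro ⟨a, b⟩; exact ⟨b, a, by linarith⟩
  · exact ((hL.comp measurable_fst).indicator hS).aemeasurable

lemma zzD_le_zzN {f : ℝ → ℂ} (hf : AEStronglyMeasurable f μI) {α : ℝ} (hα : 0 ≤ α) :
    zzD α f ≤ zzN α f := by
  rw [zzN_eq hf]
  refine lintegral_mono fun l => ?_
  have h2 := zz_distFun_le f l
  calc _ = ∫⁻ t in Ioo (0:ℝ) (distFun f l), ENNReal.ofReal (zzL (distFun f l) ^ α) := by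
        rw [setLIntegral_const, Real.volume_Ioo, sub_zero, ENNReal.ofReal_mul (zz_distFun_nonneg f l),
          mul_comm]
    _ ≤ _ := by
      refine setLIntegral_mono' measurableSet_Ioo fun t ht => ?_
      exact ENNReal.ofReal_le_ofReal (zzL_pow_anti hα ht.1 ht.2.le h2)

lemma zz_log_pow {a : ℝ} (ha : 1 ≤ a) {m : ℝ} (hm : 0 < m) : Real.log a ≤ m * a ^ (1 / m) := by
  have := Real.log_le_rpow_div (x := a) (ε := 1 / m) (by linarith) (by positivity)
  calc _ ≤ _ := this
    _ = _ := by field_simp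

/-- upper bound for the primitive of the weight -/
lemma zz_prim_le {α : ℝ} (hα : 0 ≤ α) : ∃ C : ℝ, 0 < C ∧ ∀ s, 0 ≤ s → s ≤ 2 →
    ∫⁻ t in Ioo (0:ℝ) s, ENNReal.ofReal (zzL t ^ α) ≤ ENNReal.ofReal (C * (s * zzL s ^ α)) := by
  set m : ℝ := 2 * (α + 1)
  have hm : 0 < m := by positivity
  set K : ℝ := (1 + m) ^ α
  have hK : 0 < K := by positivity
  refine ⟨2 * K, by positivity, fun s hs0 hs2 => ?_⟩
  rcases hs0.eq_or_lt with rfl | hs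
  · simp
  have hLs := zzL_ge_one hs hs2
  have hpt : ∀ t ∈ Ioo (0:ℝ) s, zzL t ^ α ≤ (zzL s ^ α * K * s ^ (1/2 : ℝ)) * t ^ (-1/2 : ℝ) := by
    intro t ht
    have hr : 1 ≤ s / t := by rw [le_div_iff₀ ht.1]; linarith [ht.2]
    have e : zzL t = zzL s + Real.log (s / t) := by
      unfold zzL
      have := ht.1
      rw [← Real.log_mul (by positivity) (by positivity)]
      congr 1
      field_simp
    have h1 : Real.log (s / t) ≤ m * (s / t) ^ (1 / m) := zz_log_pow hr hm
    have h2 : 1 ≤ (s / t) ^ (1 / m) := Real.one_le_rpow hr (by positivity)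
    have h3 : zzL t ≤ zzL s * ((1 + m) * (s / t) ^ (1 / m)) := by
      rw [e]
      nlinarith [mul_nonneg hm.le (zero_le_one.trans h2)]
    have h4 : 0 ≤ zzL t := by linarith [zzL_ge_one ht.1 (ht.2.le.trans hs2)]
    calc zzL t ^ α ≤ (zzL s * ((1 + m) * (s / t) ^ (1 / m))) ^ α := Real.rpow_le_rpow h4 h3 hα
      _ = zzL s ^ α * K * (s / t) ^ ((1 / m) * α) := by
        rw [Real.mul_rpow (by linarith) (by positivity), Real.mul_rpow (by positivity) (by positivity),
          ← Real.rpow_mul (by linarith)]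
        ring
      _ ≤ zzL s ^ α * K * (s / t) ^ (1 / 2 : ℝ) := by
        gcongr ?_ * ?_
        refine Real.rpow_le_rpow_of_exponent_le hr ?_
        · rw [one_div, ← div_eq_inv_mul, div_le_iff₀ hm]
          simp only [m]; linarith
      _ = _ := by
        have h7 : (-1/2 : ℝ) = -(1/2) := by norm_num
        rw [Real.div_rpow hs.le ht.1.le, h7, Real.rpow_neg ht.1.le]
        ring
  set A : ℝ := zzL s ^ α * K * s ^ (1/2 : ℝ)
  have hA : 0 ≤ A := by positivity
  calc _ ≤ ∫⁻ t in Ioo (0:ℝ) s, ENNReal.ofReal (A * t ^ (-1/2 : ℝ)) :=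
        setLIntegral_mono' measurableSet_Ioo fun t ht => ENNReal.ofReal_le_ofReal (hpt t ht)
    _ = ENNReal.ofReal (∫ t in Ioo (0:ℝ) s, A * t ^ (-1/2 : ℝ)) := by
        rw [ofReal_integral_eq_lintegral_ofReal]
        · refine Integrable.const_mul ?_ _
          have := intervalIntegral.intervalIntegrable_rpow' (a := 0) (b := s) (r := (-1/2 : ℝ)) (by norm_num)
          rw [intervalIntegrable_iff_integrableOn_Ioo_of_le hs.le] at this
          exact this
        · refine (ae_restrict_iff' measurableSet_Ioo).2 (Eventually.of_forall fun t ht => ?_)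
          have := ht.1
          simp only [Pi.zero_apply]
          positivity
    _ = _ := by
        congr 1
        rw [integral_const_mul, ← integral_Ioc_eq_integral_Ioo, ← intervalIntegral.integral_of_le hs.le,
          integral_rpow (Or.inl (by norm_num))]
        have h8 : s ^ (1/2 : ℝ) * s ^ (1/2 : ℝ) = s := by
          rw [← Real.rpow_add hs]; norm_num
        norm_num
        simp only [A]
        linear_combination (2 * zzL s ^ α * K) * h8

lemma zzN_le_zzD {α : ℝ} (hα : 0 ≤ α) : ∃ C : ℝ, 0 < C ∧ ∀ f : ℝ → ℂ, AEStronglyMeasurable f μI →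
    zzN α f ≤ ENNReal.ofReal C * zzD α f := by
  obtain ⟨C, hC, h⟩ := zz_prim_le hα
  refine ⟨C, hC, fun f hf => ?_⟩
  rw [zzN_eq hf, zzD, ← lintegral_const_mul' _ _ (by simp)]
  refine lintegral_mono fun l => ?_
  simp only []
  rw [← ENNReal.ofReal_mul hC.le]
  exact h _ (zz_distFun_nonneg f l) (zz_distFun_le f l)

lemma zz_set_bound {H : ℝ → ENNReal} (hH : AEMeasurable H volume) {A α : ℝ} (hA : 0 ≤ A) (hα : 0 ≤ α)
    (hp : ∀ k : ℕ, 1 ≤ k → ∫⁻ x, H x ^ (2 * k) ≤ ENNReal.ofReal (A * (k : ℝ) ^ α) ^ (2 * k))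
    (E : Set ℝ) {s : ℝ} (hs0 : 0 ≤ s) (hs2 : s ≤ 2) (hE : volume E = ENNReal.ofReal s) :
    ∫⁻ x in E, H x ≤ ENNReal.ofReal (2 * 2 ^ α * A * (s * zzL s ^ α)) := by
  rcases hs0.eq_or_lt with rfl | hs
  · have : volume E = 0 := by simpa using hE
    rw [setLIntegral_measure_zero _ _ this]; exact zero_le
  have hL := zzL_ge_one hs hs2
  set k := ⌈zzL s⌉₊
  have hk1 : zzL s ≤ k := Nat.le_ceil _
  have hk2 : (k : ℝ) < zzL s + 1 := Nat.ceil_lt_add_one (by linarith)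
  have hk : 1 ≤ k := by
    have : (1 : ℝ) ≤ k := hL.trans hk1
    exact_mod_cast this
  have h1 := zz_holder (volume.restrict E) hH.restrict (2 * k) (by omega)
  rw [Measure.restrict_apply_univ, hE] at h1
  have h2 : ∫⁻ x in E, H x ^ (2 * k) ≤ ENNReal.ofReal (A * (k : ℝ) ^ α) ^ (2 * k) :=
    (lintegral_mono' Measure.restrict_le_self le_rfl).trans (hp k hk)
  have h3 : s ^ (2 * k - 1) ≤ (2 * s) ^ (2 * k) := by
    have e1 : s⁻¹ ≤ 2 ^ (2 * k) := by
      calc s⁻¹ ≤ 2 * Real.exp 1 / s := by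
            rw [div_eq_mul_inv]
            have := Real.add_one_le_exp (1:ℝ)
            have : 0 < s⁻¹ := by positivity
            nlinarith
        _ = Real.exp (zzL s) := by unfold zzL; rw [Real.exp_log (by positivity)]
        _ ≤ Real.exp k := Real.exp_le_exp.2 hk1
        _ = (Real.exp 1) ^ k := by rw [← Real.exp_nat_mul]; simp
        _ ≤ 4 ^ k := by
          gcongr
          linarith [Real.exp_one_lt_d9]
        _ = 2 ^ (2 * k) := by rw [pow_mul]; norm_num
    obtain ⟨j, hj⟩ : ∃ j, 2 * k = j + 1 := ⟨2 * k - 1, by omega⟩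
    rw [mul_pow]
    rw [hj] at e1 ⊢
    simp only [add_tsub_cancel_right]
    calc s ^ j = s⁻¹ * s ^ (j + 1) := by rw [pow_succ]; field_simp
      _ ≤ _ := by gcongr
  have h4 : (∫⁻ x in E, H x) ^ (2 * k) ≤ (ENNReal.ofReal (2 * s * (A * (k : ℝ) ^ α))) ^ (2 * k) := by
    rw [ENNReal.ofReal_mul (by positivity), mul_pow]
    refine h1.trans (mul_le_mul' ?_ h2)
    rw [← ENNReal.ofReal_pow hs.le, ← ENNReal.ofReal_pow (by positivity)]
    exact ENNReal.ofReal_le_ofReal h3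
  have h5 : ∫⁻ x in E, H x ≤ ENNReal.ofReal (2 * s * (A * (k : ℝ) ^ α)) :=
    (ENNReal.pow_le_pow_left_iff (by omega)).1 h4
  refine h5.trans (ENNReal.ofReal_le_ofReal ?_)
  have h6 : (k : ℝ) ^ α ≤ 2 ^ α * zzL s ^ α := by
    rw [← Real.mul_rpow (by norm_num) (by linarith)]
    exact Real.rpow_le_rpow (by positivity) (by linarith) hα
  calc _ ≤ 2 * s * (A * (2 ^ α * zzL s ^ α)) := by gcongr
    _ = _ := by ring

lemma zz_pair {H : ℝ → ENNReal} (hH : AEMeasurable H volume) {A α : ℝ} (hA : 0 ≤ A) (hα : 0 ≤ α)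
    (hp : ∀ k : ℕ, 1 ≤ k → ∫⁻ x, H x ^ (2 * k) ≤ ENNReal.ofReal (A * (k : ℝ) ^ α) ^ (2 * k))
    {f : ℝ → ℂ} (hf : AEStronglyMeasurable f μI) :
    ∫⁻ x, ‖f x‖ₑ * H x ∂μI ≤ ENNReal.ofReal (2 * 2 ^ α * A) * zzD α f := by
  have hH' : AEMeasurable H μI := hH.mono_measure Measure.restrict_le_self
  have h1 := lintegral_eq_lintegral_meas_lt (f := fun x => ‖f x‖) (μI.withDensity H)
    (Eventually.of_forall fun x => norm_nonneg _)
    (hf.norm.aemeasurable.mono_ac (withDensity_absolutelyContinuous _ _))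
  simp only [ofReal_norm] at h1
  rw [lintegral_withDensity_eq_lintegral_mul₀ hH' hf.enorm] at h1
  simp only [Pi.mul_apply, mul_comm (H _)] at h1
  rw [h1, zzD, ← lintegral_const_mul' _ _ (by simp)]
  refine lintegral_mono fun l => ?_
  simp only []
  rw [withDensity_apply', μI, Measure.restrict_restrict' measurableSet_Ioo,
    ← ENNReal.ofReal_mul (by positivity)]
  refine zz_set_bound hH hA hα hp _ (zz_distFun_nonneg f l) (zz_distFun_le f l) ?_
  rw [zz_distFun_ofReal, μI, Measure.restrict_apply' measurableSet_Ioo]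

lemma zzF_cont {h : ℝ → ℂ} (hi : Integrable h) {δ : ℝ} (hδ : 0 < δ) :
    Continuous (fun x : ℝ => zzF h (x + δ * Complex.I)) := by
  have h1 : ContinuousOn (zzF h) {z | 0 < z.im} := (zzF_diff hi).continuousOn
  refine h1.comp_continuous (by fun_prop) (fun x => ?_)
  simpa using hδ

lemma zzF_bdd {h : ℝ → ℂ} (hi : Integrable h) {δ : ℝ} (hδ : 0 < δ) (x : ℝ) :
    ‖zzF h (x + δ * Complex.I)‖ ≤ (∫ y, ‖h y‖) / δ := by
  refine zzF_norm_le hi hδ fun y _ => ?_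
  have := zz_sub_ge_im (x + δ * Complex.I) y
  simpa [abs_of_pos hδ] using this

lemma zzF_split {h : ℝ → ℂ} (hi : Integrable h) {z : ℂ} (hz : 0 < z.im) :
    ‖zzF h z‖ₑ ≤ ‖zzF (fun y => ((h y).re : ℂ)) z‖ₑ + ‖zzF (fun y => ((h y).im : ℂ)) z‖ₑ := by
  have h1 : Integrable (fun y => ((h y).re : ℂ)) := hi.re.ofReal
  have h2 : Integrable (fun y => ((h y).im : ℂ)) := hi.im.ofReal
  have e : zzF h z = zzF (fun y => ((h y).re : ℂ)) z + Complex.I * zzF (fun y => ((h y).im : ℂ)) z := by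
    unfold zzF
    rw [← integral_const_mul, ← integral_add (zzF_integrable h1 hz)
      ((zzF_integrable h2 hz).const_mul _)]
    congr 1; ext y
    conv_lhs => rw [← Complex.re_add_im (h y)]
    ring
  rw [e]
  refine (enorm_add_le _ _).trans ?_
  gcongr
  have h3 : ‖Complex.I‖ₑ = 1 := by rw [← ofReal_norm]; simp
  rw [enorm_mul, h3, one_mul]

lemma zzF_conj (h : ℝ → ℂ) (y δ : ℝ) :
    ∫ x : ℝ, h x / ((x : ℂ) + δ * Complex.I - y) =
      - (starRingEnd ℂ) (zzF (fun x => (starRingEnd ℂ) (h x)) (y + δ * Complex.I)) := by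
  unfold zzF
  rw [← integral_conj, ← integral_neg]
  congr 1; ext x
  simp only [map_div₀, map_sub, map_add, map_mul, Complex.conj_conj, Complex.conj_ofReal, Complex.conj_I]
  rw [← div_neg]
  congr 1; ring

lemma zz_fub {f h : ℝ → ℂ} (hf : Integrable f) (hh : Integrable h) {δ : ℝ} (hδ : 0 < δ) :
    ∫ x : ℝ, zzF f (x + δ * Complex.I) * h x =
      ∫ y : ℝ, f y * ∫ x : ℝ, h x / ((x : ℂ) + δ * Complex.I - y) := by
  unfold zzF
  simp_rw [← integral_const_mul, ← integral_mul_const]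
  rw [integral_integral_swap]
  · congr 1; ext y; congr 1; ext x
    ring
  · have h1 : Integrable (fun p : ℝ × ℝ => h p.1 * f p.2) (volume.prod volume) := hh.mul_prod hf
    have h2 : Measurable (fun p : ℝ × ℝ => ((p.1 : ℂ) + δ * Complex.I - p.2)⁻¹) := by fun_prop
    have h3 := h1.mul_bdd (c := δ⁻¹) h2.aestronglyMeasurable (Eventually.of_forall fun p => by
      rw [norm_inv]
      have := zz_sub_ge_im (p.1 + δ * Complex.I) p.2
      simp [abs_of_pos hδ] at this
      gcongr)
    refine h3.congr (Eventually.of_forall fun p => ?_)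
    simp only [Function.uncurry]
    ring

lemma zz_weight {f : ℝ → ℂ} (hf : Integrable f) (hs : ∀ y, y ∉ Ioo (-1 : ℝ) 1 → f y = 0)
    {g : ℝ → ℝ} (hgm : Measurable g) (hg0 : ∀ x, 0 ≤ g x) {N : ℝ} (hgN : ∀ x, g x ≤ N)
    (hgs : ∀ y, y ∉ Ioo (-1 : ℝ) 1 → g y = 0) {B β : ℝ} (hB : 0 ≤ B) (hβ : 0 ≤ β)
    (hp : ∀ k : ℕ, 1 ≤ k → ∫⁻ x, ENNReal.ofReal (g x) ^ (2 * k) ≤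
      ENNReal.ofReal (B * (k : ℝ) ^ β) ^ (2 * k)) {δ : ℝ} (hδ : 0 < δ) :
    ∫⁻ x : ℝ, ‖zzF f (x + δ * Complex.I)‖ₑ * ENNReal.ofReal (g x) ≤
      ENNReal.ofReal (2 * (2 * 2 ^ (1 + β) * (8 * Real.pi * B))) * zzD (1 + β) f := by
  set F : ℝ → ℂ := fun x => zzF f (x + δ * Complex.I) with hF
  have hFc : Continuous F := zzF_cont hf hδ
  have hgi : Integrable g := by
    have h1 : IntegrableOn g (Ioo (-1 : ℝ) 1) := by
      refine Measure.integrableOn_of_bounded (M := N) (by simp) hgm.aestronglyMeasurable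
        (Eventually.of_forall fun x => ?_)
      rw [Real.norm_eq_abs, abs_of_nonneg (hg0 x)]; exact hgN x
    refine (integrableOn_iff_integrable_of_support_subset fun x hx => ?_).1 h1
    by_contra h2; exact hx (hgs x h2)
  set h : ℝ → ℂ := fun x => ((starRingEnd ℂ) (F x) / ‖F x‖) * g x with hh
  have hhm : Measurable h := by
    have : Measurable F := hFc.measurable
    have h2 : Measurable (fun x => (starRingEnd ℂ) (F x)) := (Complex.continuous_conj.comp hFc).measurable
    fun_prop
  have hhn : ∀ x, ‖h x‖ ≤ g x := fun x => by
    rw [hh]; simp only [norm_mul, norm_div, RCLike.norm_conj, Complex.norm_real,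
      Real.norm_eq_abs, abs_of_nonneg (hg0 x), abs_of_nonneg (norm_nonneg (F x))]
    exact mul_le_of_le_one_left (hg0 x) (div_self_le_one _)
  have hhi : Integrable h := hgi.mono' hhm.aestronglyMeasurable (Eventually.of_forall hhn)
  have hFh : ∀ x, F x * h x = ((‖F x‖ * g x : ℝ) : ℂ) := fun x => by
    rw [hh]
    simp only
    by_cases h0 : F x = 0
    · simp [h0]
    have h1 : (‖F x‖ : ℂ) ≠ 0 := by simpa using h0
    have h2 : F x * (starRingEnd ℂ) (F x) = (‖F x‖ : ℂ) ^ 2 := by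
      rw [Complex.mul_conj, Complex.normSq_eq_norm_sq]; push_cast; ring
    push_cast
    rw [← mul_assoc, mul_div_assoc', h2]
    field_simp
  have hFgi : Integrable (fun x => ‖F x‖ * g x) :=
    hgi.bdd_mul (c := (∫ y, ‖f y‖) / δ) hFc.norm.aestronglyMeasurable
      (Eventually.of_forall fun x => by simpa using zzF_bdd hf hδ x)
  have e1 : ∫⁻ x, ‖F x‖ₑ * ENNReal.ofReal (g x) = ‖∫ x, F x * h x‖ₑ := by
    simp_rw [hFh]
    rw [integral_complex_ofReal]
    have : 0 ≤ ∫ x, ‖F x‖ * g x := integral_nonneg fun x => mul_nonneg (norm_nonneg _) (hg0 x)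
    rw [← ofReal_norm, Complex.norm_real, Real.norm_eq_abs, abs_of_nonneg this,
      ofReal_integral_eq_lintegral_ofReal hFgi
        (Eventually.of_forall fun x => mul_nonneg (norm_nonneg _) (hg0 x))]
    refine lintegral_congr fun x => ?_
    rw [ENNReal.ofReal_mul (norm_nonneg _), ofReal_norm]
  rw [e1, hF, zz_fub hf hhi hδ]
  set h' : ℝ → ℂ := fun x => (starRingEnd ℂ) (h x) with hh'
  have hi' : Integrable h' := by
    refine hgi.mono' (Complex.continuous_conj.measurable.comp hhm).aestronglyMeasurable
      (Eventually.of_forall fun x => ?_)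
    simpa [hh'] using hhn x
  have hz : ∀ y : ℝ, 0 < ((y : ℂ) + δ * Complex.I).im := fun y => by simpa using hδ
  have hpart : ∀ u : ℝ → ℝ, Measurable u → (∀ x, |u x| ≤ g x) →
      ∫⁻ y, ‖f y‖ₑ * ‖zzF (fun y => (u y : ℂ)) (y + δ * Complex.I)‖ₑ ∂μI ≤
        ENNReal.ofReal (2 * 2 ^ (1 + β) * (8 * Real.pi * B)) * zzD (1 + β) f := by
    intro u hu hug
    have hui : Integrable (fun y => (u y : ℂ)) := by
      refine (hgi.mono' hu.aestronglyMeasurable (Eventually.of_forall hug)).ofReal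
    have hus : ∀ y, y ∉ Ioo (-1 : ℝ) 1 → (u y : ℂ) = 0 := fun y hy => by
      have := hug y
      rw [hgs y hy] at this
      simpa using this
    refine zz_pair (zzF_cont hui hδ).measurable.enorm.aemeasurable (by positivity) (by positivity)
      (fun k hk => ?_) hf.1.restrict
    refine (zzF_Lp hui (by simp) hus hδ k hk).trans ?_
    have : ∫⁻ y, ‖(u y : ℂ)‖ₑ ^ (2 * k) ≤ ENNReal.ofReal (B * (k : ℝ) ^ β) ^ (2 * k) := by
      refine le_trans (lintegral_mono fun y => ?_) (hp k hk)
      simp only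
      gcongr
      rw [← ofReal_norm]
      apply ENNReal.ofReal_le_ofReal
      simpa using hug y
    refine (mul_le_mul_right this _).trans ?_
    rw [← mul_pow, ← ENNReal.ofReal_mul (by positivity)]
    have hk' : (0 : ℝ) < k := by exact_mod_cast hk
    apply le_of_eq
    rw [Real.rpow_add hk', Real.rpow_one]
    ring_nf
  calc _ ≤ ∫⁻ y, ‖f y * ∫ x : ℝ, h x / ((x : ℂ) + δ * Complex.I - y)‖ₑ := enorm_integral_le_lintegral_enorm _
    _ = ∫⁻ y, ‖f y‖ₑ * ‖zzF h' (y + δ * Complex.I)‖ₑ := by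
        refine lintegral_congr fun y => ?_
        rw [enorm_mul, zzF_conj, enorm_neg, ← ofReal_norm ((starRingEnd ℂ) _), RCLike.norm_conj, ofReal_norm]
    _ = ∫⁻ y, ‖f y‖ₑ * ‖zzF h' (y + δ * Complex.I)‖ₑ ∂μI := by
        rw [μI, ← lintegral_indicator measurableSet_Ioo]
        refine lintegral_congr fun y => ?_
        by_cases hy : y ∈ Ioo (-1 : ℝ) 1
        · rw [indicator_of_mem hy]
        · rw [indicator_of_notMem hy, hs y hy]; simp
    _ ≤ ∫⁻ y, (‖f y‖ₑ * ‖zzF (fun y => ((h' y).re : ℂ)) (y + δ * Complex.I)‖ₑ +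
          ‖f y‖ₑ * ‖zzF (fun y => ((h' y).im : ℂ)) (y + δ * Complex.I)‖ₑ) ∂μI := by
        refine lintegral_mono fun y => ?_
        simp only
        rw [← mul_add]
        gcongr
        exact zzF_split hi' (hz y)
    _ ≤ ENNReal.ofReal (2 * 2 ^ (1 + β) * (8 * Real.pi * B)) * zzD (1 + β) f +
        ENNReal.ofReal (2 * 2 ^ (1 + β) * (8 * Real.pi * B)) * zzD (1 + β) f := by
        have hm' : Measurable h' := Complex.continuous_conj.measurable.comp hhm
        rw [lintegral_add_left']
        · refine add_le_add (hpart _ (Complex.measurable_re.comp hm') fun x => ?_)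
            (hpart _ (Complex.measurable_im.comp hm') fun x => ?_)
          · refine (Complex.abs_re_le_norm _).trans ?_
            simpa [hh'] using hhn x
          · refine (Complex.abs_im_le_norm _).trans ?_
            simpa [hh'] using hhn x
        · have hre : Integrable (fun y => ((h' y).re : ℂ)) := hi'.re.ofReal
          exact hf.1.restrict.enorm.mul (zzF_cont hre hδ).measurable.enorm.aemeasurable
    _ = _ := by
        rw [← two_mul, ← mul_assoc, ENNReal.ofReal_mul (p := 2) (by norm_num)]
        rw [ENNReal.ofReal_ofNat]

lemma zz_layer {a : ℝ} (ha : 0 ≤ a) :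
    ∫⁻ ρ in Ioi a, ENNReal.ofReal (2 * ρ / (ρ ^ 2 + 1) ^ 2) = ENNReal.ofReal (1 / (a ^ 2 + 1)) := by
  have hd : ∀ ρ : ℝ, HasDerivAt (fun ρ : ℝ => -(1 / (ρ ^ 2 + 1))) (2 * ρ / (ρ ^ 2 + 1) ^ 2) ρ := fun ρ => by
    have h1 : HasDerivAt (fun ρ : ℝ => ρ ^ 2 + 1) (2 * ρ) ρ := by
      simpa using (hasDerivAt_pow 2 ρ).add_const 1
    have h2 := (h1.inv (by positivity)).neg
    refine (h2.congr_of_eventuallyEq (Eventually.of_forall fun t => ?_)).congr_deriv ?_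
    · simp
    · ring
  have hl : Tendsto (fun ρ : ℝ => -(1 / (ρ ^ 2 + 1))) atTop (nhds 0) := by
    have : Tendsto (fun ρ : ℝ => ρ ^ 2 + 1) atTop atTop :=
      tendsto_atTop_add_const_right _ _ (tendsto_pow_atTop (by norm_num))
    simpa using this.inv_tendsto_atTop.neg
  have hn : ∀ ρ ∈ Ioi a, 0 ≤ 2 * ρ / (ρ ^ 2 + 1) ^ 2 := fun ρ hρ => by
    have : 0 < ρ := lt_of_le_of_lt ha hρ
    positivity
  have h1 := integrableOn_Ioi_deriv_of_nonneg' (a := a) (fun x _ => hd x) hn hl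
  have h2 := integral_Ioi_of_hasDerivAt_of_nonneg' (a := a) (fun x _ => hd x) hn hl
  rw [← ofReal_integral_eq_lintegral_ofReal h1 (ae_restrict_of_forall_mem measurableSet_Ioi hn), h2]
  simp

lemma zz_AI_le {φ : ℝ → ENNReal} (hφ : AEMeasurable φ volume) (x : ℝ) {ε : ℝ} (hε : 0 < ε) :
    ∫⁻ y, ENNReal.ofReal (ε / ((x - y) ^ 2 + ε ^ 2)) * φ y ≤
      ∫⁻ ρ in Ioi (0 : ℝ), ENNReal.ofReal (4 * ρ ^ 2 / (ρ ^ 2 + 1) ^ 2) *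
        ((∫⁻ y in Metric.closedBall x (ε * ρ), φ y) / volume (Metric.closedBall x (ε * ρ))) := by
  set w : ℝ → ENNReal := fun ρ => ENNReal.ofReal (2 * ρ / (ρ ^ 2 + 1) ^ 2) with hw
  have hwm : Measurable w := by fun_prop
  have hS : MeasurableSet {p : ℝ × ℝ | |x - p.1| < ε * p.2} := measurableSet_lt (by fun_prop) (by fun_prop)
  have e1 : ∀ y, ENNReal.ofReal (ε / ((x - y) ^ 2 + ε ^ 2)) * φ y =
      ∫⁻ ρ in Ioi (0 : ℝ), {p : ℝ × ℝ | |x - p.1| < ε * p.2}.indicator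
        (fun p => ENNReal.ofReal ε⁻¹ * (w p.2 * φ p.1)) (y, ρ) := fun y => by
    have h1 : ∀ ρ, {p : ℝ × ℝ | |x - p.1| < ε * p.2}.indicator
        (fun p => ENNReal.ofReal ε⁻¹ * (w p.2 * φ p.1)) (y, ρ) =
        (Ioi (|x - y| / ε)).indicator (fun ρ => ENNReal.ofReal ε⁻¹ * (w ρ * φ y)) ρ := fun ρ => by
      have : (y, ρ) ∈ {p : ℝ × ℝ | |x - p.1| < ε * p.2} ↔ ρ ∈ Ioi (|x - y| / ε) := by
        simp [div_lt_iff₀ hε, mul_comm]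
      by_cases h : ρ ∈ Ioi (|x - y| / ε)
      · rw [indicator_of_mem h, indicator_of_mem (this.2 h)]
      · rw [indicator_of_notMem h, indicator_of_notMem (fun h' => h (this.1 h'))]
    simp_rw [h1]
    rw [lintegral_indicator measurableSet_Ioi, Measure.restrict_restrict measurableSet_Ioi,
      inter_eq_left.2 (Ioi_subset_Ioi (by positivity)), lintegral_const_mul _ (by fun_prop),
      lintegral_mul_const _ hwm, zz_layer (by positivity), ← mul_assoc, ← ENNReal.ofReal_mul (by positivity)]
    congr 2
    rw [div_pow, sq_abs]
    field_simp
  simp_rw [e1]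
  rw [lintegral_lintegral_swap]
  · refine setLIntegral_mono' measurableSet_Ioi fun ρ hρ => ?_
    have hρ' : 0 < ρ := hρ
    calc _ ≤ ∫⁻ y, (Metric.closedBall x (ε * ρ)).indicator (fun y => (ENNReal.ofReal ε⁻¹ * w ρ) * φ y) y := by
          refine lintegral_mono fun y => ?_
          simp only
          by_cases h : (y, ρ) ∈ {p : ℝ × ℝ | |x - p.1| < ε * p.2}
          · have h2 : y ∈ Metric.closedBall x (ε * ρ) := by
              rw [Metric.mem_closedBall, Real.dist_eq, abs_sub_comm]
              exact le_of_lt h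
            rw [indicator_of_mem h, indicator_of_mem h2, mul_assoc]
          · rw [indicator_of_notMem h]; exact zero_le
      _ = (ENNReal.ofReal ε⁻¹ * w ρ) * ∫⁻ y in Metric.closedBall x (ε * ρ), φ y := by
          rw [lintegral_indicator Metric.isClosed_closedBall.measurableSet, lintegral_const_mul']
          finiteness
      _ = _ := by
          have hp : 0 < 2 * (ε * ρ) := by positivity
          rw [Real.volume_closedBall, ENNReal.div_eq_inv_mul, ← mul_assoc,
            ← ENNReal.ofReal_inv_of_pos hp, hw, ← ENNReal.ofReal_mul (by positivity),
            ← ENNReal.ofReal_mul (by positivity)]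
          congr 2
          field_simp
          norm_num
  · refine AEMeasurable.indicator ?_ hS
    refine AEMeasurable.const_mul (AEMeasurable.mul (by fun_prop) ?_) _
    exact hφ.comp_quasiMeasurePreserving Measure.quasiMeasurePreserving_fst

lemma zz_AI {f : ℝ → ℂ} (hf : LocallyIntegrable f volume) {C : ℝ}
    (hC : ∀ x r : ℝ, 0 < r → ∫⁻ y in Metric.closedBall x r, ‖f y‖ₑ ≤ ENNReal.ofReal (C * (1 + r))) :
    ∀ᵐ x : ℝ, Tendsto (fun ε : ℝ => ∫⁻ y, ENNReal.ofReal (ε / ((x - y) ^ 2 + ε ^ 2)) * ‖f y - f x‖ₑ)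
      (nhdsWithin 0 (Ioi 0)) (nhds 0) := by
  have hLeb := (Besicovitch.vitaliFamily (volume : Measure ℝ)).ae_tendsto_lintegral_enorm_sub_div hf
  filter_upwards [hLeb] with x hx
  have hx2 := hx.comp (Besicovitch.tendsto_filterAt volume x)
  set A : ℝ → ENNReal := fun r => (∫⁻ y in Metric.closedBall x r, ‖f y - f x‖ₑ) / volume (Metric.closedBall x r) with hA
  have hx3 : Tendsto A (nhdsWithin 0 (Ioi 0)) (nhds 0) := hx2
  have hfm : AEMeasurable (fun y => ‖f y - f x‖ₑ) volume :=
    (hf.aestronglyMeasurable.sub aestronglyMeasurable_const).enorm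
  -- uniform bound
  obtain ⟨M, hM, hAM⟩ : ∃ M : ENNReal, M ≠ ⊤ ∧ ∀ r, 0 < r → A r ≤ M := by
    have h1 : ∀ᶠ r in nhdsWithin (0:ℝ) (Ioi 0), A r ≤ 1 :=
      (hx3.eventually_lt_const (by norm_num : (0:ENNReal) < 1)).mono fun _ h => h.le
    obtain ⟨r0, hr0, h2⟩ := (mem_nhdsGT_iff_exists_Ioc_subset (a := (0:ℝ))).1 h1
    have hr0' : (0:ℝ) < r0 := hr0
    refine ⟨max 1 (ENNReal.ofReal (|C| * (1 / r0 + 1)) + ‖f x‖ₑ), by finiteness, fun r hr => ?_⟩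
    by_cases hrr : r ≤ r0
    · exact (h2 ⟨hr, hrr⟩ : A r ≤ 1).trans (le_max_left _ _)
    · push Not at hrr
      refine le_trans ?_ (le_max_right _ _)
      rw [hA]
      refine ENNReal.div_le_of_le_mul ?_
      calc _ ≤ ∫⁻ y in Metric.closedBall x r, (‖f y‖ₑ + ‖f x‖ₑ) := by
            refine lintegral_mono fun y => ?_
            exact enorm_sub_le
        _ ≤ ENNReal.ofReal (C * (1 + r)) + ‖f x‖ₑ * volume (Metric.closedBall x r) := by
            rw [lintegral_add_right _ measurable_const, setLIntegral_const]
            gcongr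
            exact hC x r hr
        _ ≤ _ := by
            rw [add_mul]
            gcongr
            rw [Real.volume_closedBall, ← ENNReal.ofReal_mul (by positivity)]
            apply ENNReal.ofReal_le_ofReal
            have h3 : 1 ≤ r / r0 := by rw [le_div_iff₀ hr0']; linarith
            have h4 : C ≤ |C| := le_abs_self C
            have h5 : 0 ≤ |C| := abs_nonneg C
            calc C * (1 + r) ≤ |C| * (r / r0 + r) := by gcongr
              _ ≤ |C| * (r / r0 + r) * 2 := by
                have : 0 ≤ |C| * (r / r0 + r) := by positivity
                linarith
              _ = _ := by field_simp
  have hAmeas : Measurable (fun r => ∫⁻ y in Metric.closedBall x r, ‖f y - f x‖ₑ) := by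
    apply Monotone.measurable
    intro a b hab
    exact lintegral_mono_set (Metric.closedBall_subset_closedBall hab)
  have hAm : Measurable A := by
    rw [hA]
    refine hAmeas.div ?_
    simp_rw [Real.volume_closedBall]
    fun_prop
  have hlim : Tendsto (fun ε : ℝ => ∫⁻ ρ in Ioi (0 : ℝ), ENNReal.ofReal (4 * ρ ^ 2 / (ρ ^ 2 + 1) ^ 2) * A (ε * ρ))
      (nhdsWithin 0 (Ioi 0)) (nhds (∫⁻ ρ in Ioi (0:ℝ), 0)) := by
    refine tendsto_lintegral_filter_of_dominated_convergence
      (fun ρ => ENNReal.ofReal (4 * (1 / (ρ ^ 2 + 1 ^ 2))) * M) ?_ ?_ ?_ ?_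
    · refine Eventually.of_forall fun ε => ?_
      have : Measurable fun ρ => A (ε * ρ) := hAm.comp (by fun_prop)
      fun_prop
    · filter_upwards [self_mem_nhdsWithin] with ε hε
      refine ae_restrict_of_forall_mem measurableSet_Ioi fun ρ hρ => ?_
      have : A (ε * ρ) ≤ M := hAM _ (mul_pos hε hρ)
      gcongr
      rw [div_le_iff₀ (by positivity)]
      field_simp
      nlinarith [sq_nonneg ρ]
    · rw [lintegral_mul_const _ (by fun_prop)]
      refine ENNReal.mul_ne_top (ne_top_of_le_ne_top ?_ (setLIntegral_le_lintegral _ _)) hM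
      have := zz_poisson_lint (δ := 1) one_pos
      simp_rw [ENNReal.ofReal_mul (by norm_num : (0:ℝ) ≤ 4)]
      rw [lintegral_const_mul _ (by fun_prop), this]
      finiteness
    · refine ae_restrict_of_forall_mem measurableSet_Ioi fun ρ hρ => ?_
      have hρ' : (0:ℝ) < ρ := hρ
      have h1 : Tendsto (fun ε : ℝ => ε * ρ) (nhdsWithin 0 (Ioi 0)) (nhdsWithin 0 (Ioi 0)) := by
        refine tendsto_nhdsWithin_of_tendsto_nhds_of_eventually_within _ ?_ ?_
        · have : Tendsto (fun ε : ℝ => ε * ρ) (nhds 0) (nhds (0 * ρ)) := (continuous_mul_const ρ).tendsto 0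
          rw [zero_mul] at this
          exact this.mono_left nhdsWithin_le_nhds
        · filter_upwards [self_mem_nhdsWithin] with ε hε using mul_pos hε hρ'
      have h2 := ENNReal.Tendsto.const_mul (a := ENNReal.ofReal (4 * ρ ^ 2 / (ρ ^ 2 + 1) ^ 2))
        (hx3.comp h1) (Or.inr (by finiteness))
      simpa using h2
  simp only [lintegral_zero] at hlim
  refine tendsto_of_tendsto_of_tendsto_of_le_of_le' tendsto_const_nhds hlim
    (Eventually.of_forall fun _ => zero_le) ?_
  filter_upwards [self_mem_nhdsWithin] with ε hε
  exact zz_AI_le hfm x hε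

lemma zz_poisson_shift (x : ℝ) {ε : ℝ} (hε : 0 < ε) :
    Integrable (fun t : ℝ => ε / ((x - t) ^ 2 + ε ^ 2)) ∧
      ∫ t : ℝ, ε / ((x - t) ^ 2 + ε ^ 2) = Real.pi := by
  have h := zz_poisson_int hε
  exact ⟨h.1.comp_sub_left x, by
    rw [integral_sub_left_eq_self (fun s : ℝ => ε / (s ^ 2 + ε ^ 2)) volume x, h.2]⟩

lemma zz_poisson_rep {K : ℂ → ℂ} (hK : DifferentiableOn ℂ K {z | 0 < z.im}) {C : ℝ} (hC : 0 ≤ C)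
    (hb : ∀ z : ℂ, 0 < z.im → ‖K z‖ ≤ C) {δ ε : ℝ} (hδ : 0 < δ) (hε : 0 < ε) (x : ℝ) :
    ∫ t : ℝ, K (t + δ * Complex.I) * ((ε / ((x - t) ^ 2 + ε ^ 2) : ℝ) : ℂ) =
      Real.pi * K (x + (δ + ε : ℝ) * Complex.I) := by
  set z0 : ℂ := x + (δ + ε : ℝ) * Complex.I with hz0
  set z1 : ℂ := x + (δ - ε : ℝ) * Complex.I with hz1
  have hz0i : z0.im = δ + ε := by simp [hz0]
  have hz1i : z1.im = δ - ε := by simp [hz1]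
  have hz0p : 0 < z0.im := by rw [hz0i]; positivity
  set G : ℂ → ℂ := fun z => dslope K z0 z / (z - z1) with hG
  have hopen : IsOpen {z : ℂ | 0 < z.im} := isOpen_lt continuous_const Complex.continuous_im
  have hds : DifferentiableOn ℂ (dslope K z0) {z | 0 < z.im} :=
    (Complex.differentiableOn_dslope (hopen.mem_nhds hz0p)).2 hK
  have hGd : DifferentiableOn ℂ G {z | max 0 (δ - ε) < z.im} := by
    have hsub : {z : ℂ | max 0 (δ - ε) < z.im} ⊆ {z : ℂ | 0 < z.im} := fun z hz =>
      lt_of_le_of_lt (le_max_left _ _) (show max 0 (δ - ε) < z.im from hz)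
    refine (hds.mono hsub).div (differentiableOn_id.sub_const _) fun z hz => ?_
    intro h0
    have : z = z1 := sub_eq_zero.1 h0
    have h2 : max 0 (δ - ε) < z.im := hz
    rw [this, hz1i] at h2
    exact absurd h2 (not_lt.2 (le_max_right _ _))
  have hGb : ∀ z : ℂ, δ ≤ z.im → 2 * ‖z0‖ + 2 * ‖z1‖ + 1 ≤ ‖z‖ → ‖G z‖ ≤ (8 * C) / ‖z‖ ^ 2 := by
    intro z hz hR
    have n0 := norm_nonneg z0
    have n1 := norm_nonneg z1
    have hzp : 0 < ‖z‖ := by linarith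
    have h0 : ‖z‖ / 2 ≤ ‖z - z0‖ := by
      have := norm_sub_norm_le z z0; linarith
    have h1 : ‖z‖ / 2 ≤ ‖z - z1‖ := by
      have := norm_sub_norm_le z z1; linarith
    have hne : z ≠ z0 := fun h => by
      rw [h, sub_self, norm_zero] at h0
      rw [h] at hzp; linarith
    rw [hG]
    simp only
    rw [dslope_of_ne _ hne, slope_def_field, norm_div, norm_div, div_div]
    have h2 : ‖K z - K z0‖ ≤ 2 * C := (norm_sub_le _ _).trans (by
      have a := hb z (by linarith); have b := hb z0 hz0p; linarith)
    calc _ ≤ 2 * C / (‖z‖ / 2 * (‖z‖ / 2)) := by gcongr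
      _ = _ := by field_simp; ring
  have hint := zz_line_integral_zero G (max_lt hδ (by linarith) : max 0 (δ - ε) < δ) (by positivity) hGd hGb
  have hP := zz_poisson_shift x hε
  have hPi : Integrable (fun t : ℝ => ((ε / ((x - t) ^ 2 + ε ^ 2) : ℝ) : ℂ)) := hP.1.ofReal
  have hKc : Continuous (fun t : ℝ => K (t + δ * Complex.I)) := by
    refine hK.continuousOn.comp_continuous (by fun_prop) (fun x => ?_)
    simpa using hδ
  have hi1 : Integrable (fun t : ℝ => K (t + δ * Complex.I) * ((ε / ((x - t) ^ 2 + ε ^ 2) : ℝ) : ℂ)) :=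
    hPi.bdd_mul (c := C) hKc.aestronglyMeasurable
      (Eventually.of_forall fun t => hb _ (by simpa using hδ))
  have hi2 : Integrable (fun t : ℝ => K z0 * ((ε / ((x - t) ^ 2 + ε ^ 2) : ℝ) : ℂ)) := hPi.const_mul _
  have e2 : ∫ t : ℝ, K z0 * ((ε / ((x - t) ^ 2 + ε ^ 2) : ℝ) : ℂ) = Real.pi * K z0 := by
    rw [integral_const_mul, integral_complex_ofReal, hP.2, mul_comm]
  rw [← e2, ← sub_eq_zero, ← integral_sub hi1 hi2]
  have e3 : ∀ t : ℝ, K (t + δ * Complex.I) * ((ε / ((x - t) ^ 2 + ε ^ 2) : ℝ) : ℂ)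
      - K z0 * ((ε / ((x - t) ^ 2 + ε ^ 2) : ℝ) : ℂ) = ε * G (t + δ * Complex.I) := by
    intro t
    set z : ℂ := t + δ * Complex.I with hz
    have hzi : z.im = δ := by simp [hz]
    have a0 : z - z0 ≠ 0 := fun h => by
      have := congrArg Complex.im (sub_eq_zero.1 h)
      rw [hzi, hz0i] at this; linarith
    have a1 : z - z1 ≠ 0 := fun h => by
      have := congrArg Complex.im (sub_eq_zero.1 h)
      rw [hzi, hz1i] at this; linarith
    have e : (((x - t) ^ 2 + ε ^ 2 : ℝ) : ℂ) = (z - z0) * (z - z1) := by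
      rw [hz, hz0, hz1]; push_cast
      linear_combination ((ε : ℂ) ^ 2) * Complex.I_sq
    rw [hG]
    simp only
    rw [dslope_of_ne _ (sub_ne_zero.1 a0), slope_def_field, Complex.ofReal_div, e]
    field_simp
  simp_rw [e3]
  rw [integral_const_mul, hint, mul_zero]

lemma zz_AI_conv {f : ℝ → ℂ} {x : ℝ} {κ : ℝ → ℝ → ℂ} {c : ℂ}
    (hx : Tendsto (fun ε : ℝ => ∫⁻ y, ENNReal.ofReal (ε / ((x - y) ^ 2 + ε ^ 2)) * ‖f y - f x‖ₑ)
      (nhdsWithin 0 (Ioi 0)) (nhds 0)) {M : ℝ} (hM : 0 ≤ M)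
    (hκ : ∀ ε, 0 < ε → ∀ y, ‖κ ε y‖ ≤ M * (ε / ((x - y) ^ 2 + ε ^ 2)))
    (hi : ∀ ε, 0 < ε → Integrable (κ ε))
    (hfi : ∀ ε, 0 < ε → Integrable (fun y => κ ε y * f y))
    (hc : ∀ ε, 0 < ε → ∫ y, κ ε y = c) :
    Tendsto (fun ε : ℝ => ∫ y, κ ε y * f y) (nhdsWithin 0 (Ioi 0)) (nhds (c * f x)) := by
  rw [tendsto_iff_edist_tendsto_0]
  have h1 := ENNReal.Tendsto.const_mul (a := ENNReal.ofReal M) hx (Or.inr (by finiteness))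
  rw [mul_zero] at h1
  refine tendsto_of_tendsto_of_tendsto_of_le_of_le' tendsto_const_nhds h1
    (Eventually.of_forall fun _ => zero_le) ?_
  filter_upwards [self_mem_nhdsWithin] with ε hε
  have hε' : 0 < ε := hε
  rw [edist_eq_enorm_sub, ← hc ε hε, ← integral_mul_const, ← integral_sub (hfi ε hε) ((hi ε hε).mul_const _)]
  refine (enorm_integral_le_lintegral_enorm _).trans ?_
  rw [← lintegral_const_mul' _ _ (by finiteness)]
  refine lintegral_mono fun y => ?_
  simp only
  rw [← mul_sub, enorm_mul, ← mul_assoc, ← ENNReal.ofReal_mul hM, ← ofReal_norm (κ ε y)]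
  gcongr
  exact hκ ε hε y

lemma zz_boundary {K : ℂ → ℂ} (hK : DifferentiableOn ℂ K {z | 0 < z.im}) {C : ℝ} (hC : 0 ≤ C)
    (hb : ∀ z : ℂ, 0 < z.im → ‖K z‖ ≤ C / (1 + ‖z‖)) :
    ∀ᵐ x : ℝ, ∃ l : ℂ, Tendsto (fun ε : ℝ => K (x + ε * Complex.I)) (nhdsWithin 0 (Ioi 0)) (nhds l) := by
  have hb' : ∀ z : ℂ, 0 < z.im → ‖K z‖ ≤ C := fun z hz => (hb z hz).trans
    (div_le_self hC (by linarith [norm_nonneg z]))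
  have hline : ∀ (x δ : ℝ), 0 < δ → 0 < ((x : ℂ) + δ * Complex.I).im := fun x δ h => by simpa using h
  have hKc : ∀ δ : ℝ, 0 < δ → Continuous (fun t : ℝ => K (t + δ * Complex.I)) := fun δ hδ =>
    hK.continuousOn.comp_continuous (by fun_prop) (fun x => hline x δ hδ)
  -- domination
  have hdom : ∀ δ : ℝ, 0 < δ → ∀ t : ℝ, ‖K (t + δ * Complex.I)‖ ^ 2 ≤ C ^ 2 * (1 / (t ^ 2 + 1 ^ 2)) := by
    intro δ hδ t
    have h1 := hb _ (hline t δ hδ)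
    have h2 : |t| ≤ ‖(t : ℂ) + δ * Complex.I‖ := by
      have := Complex.abs_re_le_norm ((t : ℂ) + δ * Complex.I)
      simpa using this
    calc _ ≤ (C / (1 + |t|)) ^ 2 := by
          gcongr
          exact h1.trans (by gcongr)
      _ ≤ _ := by
          rw [div_pow, mul_one_div]
          gcongr
          nlinarith [abs_nonneg t, sq_abs t]
  have hsq : Integrable (fun t : ℝ => C ^ 2 * (1 / (t ^ 2 + 1 ^ 2))) := (zz_poisson_int one_pos).1.const_mul _
  have hmem : ∀ δ : ℝ, 0 < δ → MemLp (fun t : ℝ => K (t + δ * Complex.I)) 2 volume := fun δ hδ => by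
    rw [memLp_two_iff_integrable_sq_norm (hKc δ hδ).aestronglyMeasurable]
    refine hsq.mono' ((hKc δ hδ).norm.pow 2).aestronglyMeasurable (Eventually.of_forall fun t => ?_)
    rw [Real.norm_eq_abs, abs_of_nonneg (by positivity)]
    exact hdom δ hδ t
  classical
  set k : ℝ → Lp ℂ 2 (volume : Measure ℝ) := fun δ => if h : 0 < δ then (hmem δ h).toLp _ else 0 with hk
  have hkn : ∀ δ, 0 < δ → ‖k δ‖ ^ 2 ≤ C ^ 2 * Real.pi := by
    intro δ hδ
    rw [hk]
    simp only [hδ, dif_pos]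
    rw [← inner_self_eq_norm_sq (𝕜 := ℂ), L2.inner_def]
    have : ∀ᵐ t : ℝ, inner ℂ ((hmem δ hδ).toLp _ t) ((hmem δ hδ).toLp _ t) = ((‖K (t + δ * Complex.I)‖ ^ 2 : ℝ) : ℂ) := by
      filter_upwards [(hmem δ hδ).coeFn_toLp] with t ht
      rw [ht, inner_self_eq_norm_sq_to_K]; push_cast; rfl
    rw [integral_congr_ae this, integral_complex_ofReal]
    have h2 : ∫ t : ℝ, C ^ 2 * (1 / (t ^ 2 + 1 ^ 2)) = C ^ 2 * Real.pi := by
      rw [integral_const_mul, (zz_poisson_int one_pos).2]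
    rw [← h2]
    simp only [RCLike.re_to_complex, Complex.ofReal_re]
    refine integral_mono_of_nonneg (Eventually.of_forall fun t => by positivity) hsq
      (Eventually.of_forall (hdom δ hδ))
  -- weak limit
  obtain ⟨k0, hk0⟩ : ∃ k0 : Lp ℂ 2 (volume : Measure ℝ), ∃ U : Filter ℝ, U.NeBot ∧ U ≤ nhdsWithin 0 (Ioi 0) ∧
      ∀ u : Lp ℂ 2 (volume : Measure ℝ), Tendsto (fun δ => inner ℂ (k δ) u) U (nhds (inner ℂ k0 u)) := by
    set R : ℝ := Real.sqrt (C ^ 2 * Real.pi)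
    set U : Ultrafilter ℝ := Ultrafilter.of (nhdsWithin (0:ℝ) (Ioi 0))
    have hU : (U : Filter ℝ) ≤ nhdsWithin (0:ℝ) (Ioi 0) := Ultrafilter.of_le _
    set Φ : ℝ → WeakDual ℂ (Lp ℂ 2 (volume : Measure ℝ)) := fun δ =>
      StrongDual.toWeakDual (InnerProductSpace.toDual ℂ _ (k δ)) with hΦ
    have hcomp := WeakDual.isCompact_closedBall (𝕜 := ℂ) (E := Lp ℂ 2 (volume : Measure ℝ)) 0 R
    obtain ⟨φ, -, hφ⟩ := hcomp.ultrafilter_le_nhds (U.map Φ) (by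
      rw [Filter.le_principal_iff, Ultrafilter.mem_coe, Ultrafilter.mem_map]
      refine hU ?_
      filter_upwards [self_mem_nhdsWithin] with δ hδ
      have : ‖k δ‖ ≤ R := Real.le_sqrt_of_sq_le (hkn δ hδ)
      simpa [hΦ] using this)
    refine ⟨(InnerProductSpace.toDual ℂ _).symm (WeakDual.toStrongDual φ), U, inferInstance, hU, fun u => ?_⟩
    have h1 : Tendsto Φ U (nhds φ) := hφ
    have h2 := ((WeakDual.eval_continuous u).tendsto φ).comp h1
    rw [InnerProductSpace.toDual_symm_apply]
    exact h2
  obtain ⟨U, hUb, hU, hlim⟩ := hk0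
  have hk0m : MemLp (k0 : ℝ → ℂ) 2 volume := Lp.memLp k0
  have hk0i : LocallyIntegrable (k0 : ℝ → ℂ) volume := hk0m.locallyIntegrable (by norm_num)
  have hPm : ∀ (x ε : ℝ), 0 < ε → MemLp (fun t : ℝ => ((ε / ((x - t) ^ 2 + ε ^ 2) : ℝ) : ℂ)) 2 volume := by
    intro x ε hε
    have hm : AEStronglyMeasurable (fun t : ℝ => ((ε / ((x - t) ^ 2 + ε ^ 2) : ℝ) : ℂ)) volume := by
      have : Measurable (fun t : ℝ => ((ε / ((x - t) ^ 2 + ε ^ 2) : ℝ) : ℂ)) := by fun_prop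
      exact this.aestronglyMeasurable
    rw [memLp_two_iff_integrable_sq_norm hm]
    refine ((zz_poisson_shift x hε).1.const_mul (1/ε)).mono' (hm.norm.pow 2) (Eventually.of_forall fun t => ?_)
    have h0 : 0 ≤ ε / ((x - t) ^ 2 + ε ^ 2) := by positivity
    have h1 : ε / ((x - t) ^ 2 + ε ^ 2) ≤ 1 / ε := by
      rw [div_le_div_iff₀ (by positivity) hε]; nlinarith [sq_nonneg (x - t)]
    simp only [Complex.norm_real, Real.norm_eq_abs, abs_pow, sq_abs]
    rw [sq]
    gcongr
  have hrep : ∀ (x ε : ℝ), 0 < ε → Integrable (fun t : ℝ => ((ε / ((x - t) ^ 2 + ε ^ 2) : ℝ) : ℂ) * k0 t) ∧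
      ∫ t : ℝ, ((ε / ((x - t) ^ 2 + ε ^ 2) : ℝ) : ℂ) * k0 t = Real.pi * K (x + ε * Complex.I) := by
    intro x ε hε
    refine ⟨(hPm x ε hε).integrable_mul hk0m, ?_⟩
    have h1 := hlim ((hPm x ε hε).toLp _)
    have h1' := (Complex.continuous_conj.tendsto _).comp h1
    have e0 : ∀ v : Lp ℂ 2 (volume : Measure ℝ), (starRingEnd ℂ) (inner ℂ v ((hPm x ε hε).toLp _)) =
        ∫ t : ℝ, v t * ((ε / ((x - t) ^ 2 + ε ^ 2) : ℝ) : ℂ) := by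
      intro v
      rw [inner_conj_symm, L2.inner_def]
      refine integral_congr_ae ?_
      filter_upwards [(hPm x ε hε).coeFn_toLp] with t ht
      rw [ht]
      simp [mul_comm]
    have h2 : Tendsto (fun δ : ℝ => (Real.pi : ℂ) * K (x + (δ + ε : ℝ) * Complex.I)) U
        (nhds (∫ t : ℝ, k0 t * ((ε / ((x - t) ^ 2 + ε ^ 2) : ℝ) : ℂ))) := by
      rw [← e0]
      refine h1'.congr' ?_
      filter_upwards [hU self_mem_nhdsWithin] with δ hδ
      have hδ' : 0 < δ := hδ
      simp only [Function.comp]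
      rw [e0, ← zz_poisson_rep hK hC hb' hδ hε x]
      refine integral_congr_ae ?_
      rw [hk]
      simp only [hδ', dif_pos]
      filter_upwards [(hmem δ hδ).coeFn_toLp] with t ht
      rw [ht]
    have h3 : Tendsto (fun δ : ℝ => (Real.pi : ℂ) * K (x + (δ + ε : ℝ) * Complex.I)) U
        (nhds (Real.pi * K (x + ε * Complex.I))) := by
      refine Tendsto.const_mul _ ?_
      have hd := (hK.differentiableAt ((isOpen_lt continuous_const Complex.continuous_im).mem_nhds
        (hline x ε hε))).continuousAt
      have h4 : Tendsto (fun δ : ℝ => (x : ℂ) + (δ + ε : ℝ) * Complex.I) (nhds 0) (nhds (x + ε * Complex.I)) := by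
        have : Continuous (fun δ : ℝ => (x : ℂ) + (δ + ε : ℝ) * Complex.I) := by fun_prop
        simpa using this.tendsto 0
      exact hd.tendsto.comp (h4.mono_left (hU.trans nhdsWithin_le_nhds))
    rw [← tendsto_nhds_unique h2 h3]
    congr 1; ext t; ring
  -- growth bound
  have hk0sq : Integrable (fun t => ‖k0 t‖ ^ 2) := (memLp_two_iff_integrable_sq_norm hk0m.1).1 hk0m
  set S : ℝ := ∫ t, ‖k0 t‖ ^ 2
  have hS : 0 ≤ S := integral_nonneg fun t => by positivity
  have hgrow : ∀ x r : ℝ, 0 < r → ∫⁻ y in Metric.closedBall x r, ‖k0 y‖ₑ ≤ ENNReal.ofReal ((2 + S) * (1 + r)) := by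
    intro x r hr
    calc _ ≤ ∫⁻ y in Metric.closedBall x r, (1 + ENNReal.ofReal (‖k0 y‖ ^ 2)) := by
          refine lintegral_mono fun y => ?_
          simp only
          rw [← ofReal_norm, ← ENNReal.ofReal_one, ← ENNReal.ofReal_add zero_le_one (by positivity)]
          apply ENNReal.ofReal_le_ofReal
          nlinarith [sq_nonneg (‖k0 y‖ - 1)]
      _ ≤ ENNReal.ofReal (2 * r) + ENNReal.ofReal S := by
          rw [lintegral_add_left measurable_const, setLIntegral_const, one_mul, Real.volume_closedBall]
          gcongr
          refine (setLIntegral_le_lintegral _ _).trans ?_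
          rw [ofReal_integral_eq_lintegral_ofReal hk0sq (Eventually.of_forall fun t => by positivity)]
      _ ≤ _ := by
          rw [← ENNReal.ofReal_add (by positivity) hS]
          apply ENNReal.ofReal_le_ofReal
          nlinarith [mul_nonneg hS hr.le]
  filter_upwards [zz_AI hk0i hgrow] with x hx
  have h5 := zz_AI_conv (κ := fun ε t => ((ε / ((x - t) ^ 2 + ε ^ 2) : ℝ) : ℂ)) (c := (Real.pi : ℂ)) hx zero_le_one
    (fun ε hε y => by
      have h0 : 0 ≤ ε / ((x - y) ^ 2 + ε ^ 2) := by positivity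
      rw [Complex.norm_real, Real.norm_eq_abs, abs_of_nonneg h0, one_mul])
    (fun ε hε => (zz_poisson_shift x hε).1.ofReal) (fun ε hε => (hrep x ε hε).1)
    (fun ε hε => by rw [integral_complex_ofReal, (zz_poisson_shift x hε).2])
  refine ⟨k0 x, ?_⟩
  have h6 := h5.const_mul ((Real.pi : ℂ)⁻¹)
  have hpi : (Real.pi : ℂ) ≠ 0 := by exact_mod_cast Real.pi_ne_zero
  rw [← mul_assoc, inv_mul_cancel₀ hpi, one_mul] at h6
  refine h6.congr' ?_
  filter_upwards [self_mem_nhdsWithin] with ε hε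
  rw [(hrep x ε hε).2, ← mul_assoc, inv_mul_cancel₀ hpi, one_mul]

lemma zzN_mono {f g : ℝ → ℂ} (hf : AEStronglyMeasurable f μI) (hg : AEStronglyMeasurable g μI)
    (h : ∀ x, ‖g x‖ ≤ ‖f x‖) (α : ℝ) : zzN α g ≤ zzN α f := by
  rw [zzN_eq hf, zzN_eq hg]
  refine lintegral_mono fun l => lintegral_mono_set (Ioo_subset_Ioo_right ?_)
  rw [zz_distFun_eq, zz_distFun_eq]
  exact ENNReal.toReal_mono (by finiteness) (measure_mono fun x hx => lt_of_lt_of_le hx (h x))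

lemma zzF_im_nonpos {f : ℝ → ℂ} (hi : Integrable f) (hr : ∀ y, (f y).im = 0) (hp : ∀ y, 0 ≤ (f y).re)
    {z : ℂ} (hz : 0 < z.im) : (zzF f z).im ≤ 0 := by
  have h1 := zzF_integrable hi hz
  have h2 : (zzF f z).im = ∫ y, (f y / (z - y)).im := by
    unfold zzF
    exact (integral_im h1).symm
  rw [h2]
  refine integral_nonpos fun y => ?_
  have h3 := zz_kernel_im z.re z.im y
  rw [Complex.re_add_im] at h3
  simp only [Pi.zero_apply]
  rw [div_eq_mul_inv, Complex.mul_im, hr y, h3]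
  have : 0 ≤ (f y).re * (z.im / ((z.re - y) ^ 2 + z.im ^ 2)) := mul_nonneg (hp y) (by positivity)
  linarith

lemma zz_nonneg_lim {f : ℝ → ℂ} (hi : Integrable f) (hr : ∀ y, (f y).im = 0) (hp : ∀ y, 0 ≤ (f y).re)
    (hs : ∀ y, y ∉ Ioo (-1 : ℝ) 1 → f y = 0) {M : ENNReal} (hM : M ≠ ⊤)
    (hsup : ∀ δ : ℝ, 0 < δ → ∫⁻ x : ℝ, ‖zzF f (x + δ * Complex.I)‖ₑ ∂μI ≤ M) :
    ∀ᵐ x : ℝ ∂μI, ∃ l : ℂ, Tendsto (fun ε : ℝ => zzF f (x + ε * Complex.I)) (nhdsWithin 0 (Ioi 0)) (nhds l) := by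
  set F := zzF f with hF
  have hline : ∀ (x δ : ℝ), 0 < δ → 0 < ((x : ℂ) + δ * Complex.I).im := fun x δ h => by simpa using h
  have hFI : ∀ z : ℂ, 0 < z.im → 1 ≤ ‖F z - Complex.I‖ := fun z hz => by
    have h1 := Complex.abs_im_le_norm (F z - Complex.I)
    have h2 := zzF_im_nonpos hi hr hp hz
    have h3 : (F z - Complex.I).im = (F z).im - 1 := by simp
    rw [h3, abs_of_nonpos (by linarith)] at h1
    linarith
  have hne : ∀ z : ℂ, 0 < z.im → F z - Complex.I ≠ 0 := fun z hz h => by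
    have := hFI z hz
    rw [h, norm_zero] at this; linarith
  set K : ℂ → ℂ := fun z => F z / (F z - Complex.I) with hK
  have hKd : DifferentiableOn ℂ K {z | 0 < z.im} := by
    have := zzF_diff hi
    exact this.div (this.sub_const _) fun z hz => hne z hz
  set m : ℝ := ∫ y, ‖f y‖
  have hm : 0 ≤ m := integral_nonneg fun y => norm_nonneg _
  have hKb : ∀ z : ℂ, 0 < z.im → ‖K z‖ ≤ (6 + 4 * m) / (1 + ‖z‖) := by
    intro z hz
    have h1 := hFI z hz
    have hn := norm_nonneg z
    rw [hK]
    simp only [norm_div]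
    by_cases h2 : ‖z‖ ≤ 2
    · have h3 : ‖F z‖ ≤ 2 * ‖F z - Complex.I‖ := by
        have := norm_add_le (F z - Complex.I) Complex.I
        simp at this
        linarith
      calc _ ≤ 2 := (div_le_iff₀ (by linarith)).2 h3
        _ ≤ _ := by rw [le_div_iff₀ (by linarith)]; linarith
    · push Not at h2
      have h3 := zzF_decay hi hs h2.le
      calc _ ≤ ‖F z‖ := div_le_self (norm_nonneg _) h1
        _ ≤ 2 * m / ‖z‖ := h3
        _ ≤ _ := by
          rw [div_le_div_iff₀ (by linarith) (by linarith)]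
          nlinarith
  have hlim := zz_boundary hKd (by positivity : 0 ≤ 6 + 4 * m) hKb
  have hlim' : ∀ᵐ x : ℝ ∂μI, ∃ l : ℂ, Tendsto (fun ε : ℝ => K (x + ε * Complex.I)) (nhdsWithin 0 (Ioi 0)) (nhds l) :=
    ae_restrict_of_ae hlim
  -- Fatou
  set e : ℕ → ℝ := fun n => 1 / ((n : ℝ) + 1) with he
  have he0 : ∀ n, 0 < e n := fun n => by rw [he]; positivity
  have het : Tendsto e atTop (nhdsWithin 0 (Ioi 0)) :=
    tendsto_nhdsWithin_of_tendsto_nhds_of_eventually_within _ tendsto_one_div_add_atTop_nhds_zero_nat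
      (Eventually.of_forall he0)
  have hmeas : ∀ n, Measurable (fun x : ℝ => ‖F (x + e n * Complex.I)‖ₑ) := fun n =>
    (zzF_cont hi (he0 n)).measurable.enorm
  have hfat : ∫⁻ x : ℝ, liminf (fun n => ‖F (x + e n * Complex.I)‖ₑ) atTop ∂μI ≤ M := by
    refine (lintegral_liminf_le hmeas).trans ?_
    refine (liminf_le_liminf (Eventually.of_forall fun n => hsup (e n) (he0 n))).trans ?_
    simp
  have hfin : ∀ᵐ x : ℝ ∂μI, liminf (fun n => ‖F (x + e n * Complex.I)‖ₑ) atTop < ⊤ :=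
    ae_lt_top (Measurable.liminf hmeas) (ne_top_of_le_ne_top hM hfat)
  filter_upwards [hlim', hfin] with x hx hx2
  obtain ⟨l, hl⟩ := hx
  by_cases h1 : l = 1
  · exfalso
    subst h1
    have h2 : Tendsto (fun n => K (x + e n * Complex.I)) atTop (nhds 1) := hl.comp het
    have h3 : ∀ n, ‖F (x + e n * Complex.I) - Complex.I‖ = ‖K (x + e n * Complex.I) - 1‖⁻¹ := fun n => by
      have := hne _ (hline x (e n) (he0 n))
      rw [hK]
      simp only
      rw [div_sub_one this]
      simp
    have h4 : Tendsto (fun n => ‖K (x + e n * Complex.I) - 1‖) atTop (nhdsWithin 0 (Ioi 0)) := by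
      refine tendsto_nhdsWithin_of_tendsto_nhds_of_eventually_within _ ?_ (Eventually.of_forall fun n => ?_)
      · simpa using (h2.sub_const 1).norm
      · have a := h3 n
        have b := hFI _ (hline x (e n) (he0 n))
        rw [a] at b
        by_contra hc
        simp only [mem_Ioi, not_lt] at hc
        have : ‖K (x + e n * Complex.I) - 1‖ = 0 := le_antisymm hc (norm_nonneg _)
        rw [this] at b
        norm_num at b
    have h5 := h4.inv_tendsto_nhdsGT_zero
    have h6 : Tendsto (fun n => ‖F (x + e n * Complex.I)‖) atTop atTop := by
      refine tendsto_atTop_mono (fun n => ?_) (tendsto_atTop_add_const_right _ (-1) h5)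
      simp only [Pi.inv_apply]
      rw [← h3 n]
      have := norm_sub_le (F (x + e n * Complex.I)) Complex.I
      simp at this
      linarith
    have h7 := ENNReal.tendsto_ofReal_atTop.comp h6
    simp only [Function.comp_def, ofReal_norm] at h7
    rw [h7.liminf_eq] at hx2
    exact lt_irrefl _ hx2
  · refine ⟨Complex.I * l / (l - 1), ?_⟩
    have h2 : Tendsto (fun ε : ℝ => Complex.I * K (x + ε * Complex.I) / (K (x + ε * Complex.I) - 1))
        (nhdsWithin 0 (Ioi 0)) (nhds (Complex.I * l / (l - 1))) :=
      (hl.const_mul _).div (hl.sub_const 1) (sub_ne_zero.2 h1)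
    refine h2.congr' ?_
    filter_upwards [self_mem_nhdsWithin] with ε hε
    have := hne _ (hline x ε hε)
    rw [hK]
    simp only
    rw [div_sub_one this]
    simp only [sub_sub_cancel]
    generalize F (↑x + ↑ε * Complex.I) = w at this ⊢
    field_simp

/-- unweighted bound -/
lemma zz_sup_bound {f : ℝ → ℂ} (hi : Integrable f) (hs : ∀ y, y ∉ Ioo (-1 : ℝ) 1 → f y = 0)
    {β : ℝ} (hβ : 0 ≤ β) {δ : ℝ} (hδ : 0 < δ) : ∫⁻ x : ℝ, ‖zzF f (x + δ * Complex.I)‖ₑ ∂μI ≤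
      ENNReal.ofReal (2 * (2 * 2 ^ (1 + β) * (8 * Real.pi * 2))) * zzN (1 + β) f := by
  have h := zz_weight hi hs (g := (Ioo (-1 : ℝ) 1).indicator 1) (measurable_one.indicator measurableSet_Ioo)
    (fun x => indicator_nonneg (by simp) x) (N := 1) (fun x => indicator_le_self' (by simp) x)
    (fun y hy => indicator_of_notMem hy _) (B := 2) (by norm_num) hβ (fun k hk => ?_) hδ
  · refine le_trans (le_of_eq ?_) (h.trans (mul_le_mul_right (zzD_le_zzN hi.1.restrict (by positivity)) _))
    rw [μI, ← lintegral_indicator measurableSet_Ioo]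
    refine lintegral_congr fun x => ?_
    by_cases hx : x ∈ Ioo (-1 : ℝ) 1
    · simp [indicator_of_mem hx]
    · simp [indicator_of_notMem hx]
  · have e : ∀ x : ℝ, ENNReal.ofReal ((Ioo (-1 : ℝ) 1).indicator 1 x) ^ (2 * k) =
        (Ioo (-1 : ℝ) 1).indicator 1 x := fun x => by
      by_cases hx : x ∈ Ioo (-1 : ℝ) 1
      · simp [indicator_of_mem hx]
      · rw [indicator_of_notMem hx, indicator_of_notMem hx]
        simp; omega
    simp_rw [e]
    rw [lintegral_indicator_one measurableSet_Ioo, Real.volume_Ioo, ← ENNReal.ofReal_pow (by positivity)]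
    apply ENNReal.ofReal_le_ofReal
    have hk' : (1 : ℝ) ≤ k := by exact_mod_cast hk
    have h1 : (1 : ℝ) ≤ (k : ℝ) ^ β := Real.one_le_rpow hk' hβ
    have h2 : (2 : ℝ) ≤ 2 * (k : ℝ) ^ β := by linarith
    calc (1 - -1 : ℝ) = 2 := by norm_num
      _ ≤ 2 * (k : ℝ) ^ β := h2
      _ ≤ _ := le_self_pow₀ (by linarith) (by omega)

lemma zz_lim {f : ℝ → ℂ} (hi : Integrable f) (hs : ∀ y, y ∉ Ioo (-1 : ℝ) 1 → f y = 0)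
    {β : ℝ} (hβ : 0 ≤ β) (hN : zzN (1 + β) f ≠ ⊤) :
    ∀ᵐ x : ℝ ∂μI, ∃ l : ℂ, Tendsto (fun ε : ℝ => zzF f (x + ε * Complex.I)) (nhdsWithin 0 (Ioi 0)) (nhds l) := by
  have key : ∀ u : ℝ → ℝ, Integrable u → (∀ y, 0 ≤ u y) → (∀ y, u y ≤ ‖f y‖) →
      ∀ᵐ x : ℝ ∂μI, ∃ l : ℂ, Tendsto (fun ε : ℝ => zzF (fun y => (u y : ℂ)) (x + ε * Complex.I))
        (nhdsWithin 0 (Ioi 0)) (nhds l) := by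
    intro u hu h0 hle
    have hui : Integrable (fun y => (u y : ℂ)) := hu.ofReal
    have hus : ∀ y, y ∉ Ioo (-1 : ℝ) 1 → (u y : ℂ) = 0 := fun y hy => by
      have := hle y
      rw [hs y hy, norm_zero] at this
      have := le_antisymm this (h0 y)
      simpa using this
    refine zz_nonneg_lim hui (by simp) (by simpa using h0) hus ?_ (fun δ hδ => zz_sup_bound hui hus hβ hδ)
    refine ENNReal.mul_ne_top (by finiteness) (ne_top_of_le_ne_top hN ?_)
    refine zzN_mono hi.1.restrict hui.1.restrict (fun x => ?_) _
    rw [Complex.norm_real, Real.norm_eq_abs, abs_of_nonneg (h0 x)]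
    exact hle x
  have hre : Integrable (fun y => (f y).re) := hi.re
  have him : Integrable (fun y => (f y).im) := hi.im
  have habs : ∀ a b : ℝ, |a| ≤ b → max a 0 ≤ b ∧ max (-a) 0 ≤ b := fun a b h =>
    ⟨max_le ((le_abs_self a).trans h) ((abs_nonneg a).trans h),
     max_le ((neg_le_abs a).trans h) ((abs_nonneg a).trans h)⟩
  have k1 := key (fun y => max (f y).re 0) hre.pos_part (fun y => le_max_right _ _)
    (fun y => (habs _ _ (Complex.abs_re_le_norm _)).1)
  have k2 := key (fun y => max (-(f y).re) 0) hre.neg_part (fun y => le_max_right _ _)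
    (fun y => (habs _ _ (Complex.abs_re_le_norm _)).2)
  have k3 := key (fun y => max (f y).im 0) him.pos_part (fun y => le_max_right _ _)
    (fun y => (habs _ _ (Complex.abs_im_le_norm _)).1)
  have k4 := key (fun y => max (-(f y).im) 0) him.neg_part (fun y => le_max_right _ _)
    (fun y => (habs _ _ (Complex.abs_im_le_norm _)).2)
  filter_upwards [k1, k2, k3, k4] with x h1 h2 h3 h4
  obtain ⟨l1, h1⟩ := h1
  obtain ⟨l2, h2⟩ := h2
  obtain ⟨l3, h3⟩ := h3
  obtain ⟨l4, h4⟩ := h4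
  refine ⟨l1 - l2 + Complex.I * (l3 - l4), ?_⟩
  refine ((h1.sub h2).add ((h3.sub h4).const_mul Complex.I)).congr' ?_
  filter_upwards [self_mem_nhdsWithin] with ε hε
  have hz : 0 < ((x : ℂ) + ε * Complex.I).im := by simpa using hε
  have i1 : Integrable (fun y : ℝ => ((max (f y).re 0 : ℝ) : ℂ) / ((x : ℂ) + ε * Complex.I - y)) :=
    zzF_integrable (hre.pos_part.ofReal (𝕜 := ℂ)) hz
  have i2 : Integrable (fun y : ℝ => ((max (-(f y).re) 0 : ℝ) : ℂ) / ((x : ℂ) + ε * Complex.I - y)) :=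
    zzF_integrable (hre.neg_part.ofReal (𝕜 := ℂ)) hz
  have i3 : Integrable (fun y : ℝ => ((max (f y).im 0 : ℝ) : ℂ) / ((x : ℂ) + ε * Complex.I - y)) :=
    zzF_integrable (him.pos_part.ofReal (𝕜 := ℂ)) hz
  have i4 : Integrable (fun y : ℝ => ((max (-(f y).im) 0 : ℝ) : ℂ) / ((x : ℂ) + ε * Complex.I - y)) :=
    zzF_integrable (him.neg_part.ofReal (𝕜 := ℂ)) hz
  unfold zzF
  simp only []
  rw [← integral_sub i1 i2, ← integral_sub i3 i4, ← integral_const_mul]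
  refine (integral_add (i1.sub i2) ((i3.sub i4).const_mul Complex.I)).symm.trans ?_
  refine integral_congr_ae (Eventually.of_forall fun y => ?_)
  simp only [Pi.sub_apply]
  have e1 : ∀ a : ℝ, ((max a 0 : ℝ) : ℂ) - ((max (-a) 0 : ℝ) : ℂ) = a := fun a => by
    rw [← Complex.ofReal_sub]
    congr 1
    rcases le_total 0 a with h | h
    · rw [max_eq_left h, max_eq_right (by linarith)]; ring
    · rw [max_eq_right h, max_eq_left (by linarith)]; ring
  conv_rhs => rw [← Complex.re_add_im (f y), ← e1, ← e1 (f y).im]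
  ring

/-- difference kernel -/
def zzκ (ε s : ℝ) : ℂ := ((s : ℂ) + ε * Complex.I)⁻¹ - (if ε ≤ |s| then (s : ℂ)⁻¹ else 0)

lemma zzκ_meas (ε : ℝ) : Measurable (zzκ ε) := by
  unfold zzκ
  refine Measurable.sub (by fun_prop) (Measurable.ite ?_ (by fun_prop) measurable_const)
  exact measurableSet_le measurable_const (by fun_prop)

lemma zzκ_norm {ε : ℝ} (hε : 0 < ε) (s : ℝ) : ‖zzκ ε s‖ ≤ 2 * (ε / (s ^ 2 + ε ^ 2)) := by
  have hn : ‖(s : ℂ) + ε * Complex.I‖ ^ 2 = s ^ 2 + ε ^ 2 := by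
    rw [← Complex.normSq_eq_norm_sq, Complex.normSq_add_mul_I]
  set n := ‖(s : ℂ) + ε * Complex.I‖ with hnn
  have hn0 : 0 ≤ n := norm_nonneg _
  have hnp : 0 < n := by
    rcases hn0.eq_or_lt with h | h
    · rw [← h] at hn; nlinarith [sq_nonneg s]
    · exact h
  unfold zzκ
  rw [← hn]
  split_ifs with h
  · have hs : (s : ℂ) ≠ 0 := by
      intro h0
      have : s = 0 := by exact_mod_cast h0
      rw [this, abs_zero] at h; linarith
    have hs' : 0 < |s| := hε.trans_le h
    have hd : (s : ℂ) + ε * Complex.I ≠ 0 := norm_pos_iff.1 hnp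
    rw [inv_sub_inv hd hs, norm_div, norm_mul, ← hnn, Complex.norm_real, Real.norm_eq_abs]
    have : ‖(s : ℂ) - (s + ε * Complex.I)‖ = ε := by
      simp [abs_of_pos hε]
    rw [this]
    have h2 : n ≤ 2 * |s| := by
      have : n ^ 2 ≤ (2 * |s|) ^ 2 := by
        rw [hn, mul_pow, sq_abs]
        nlinarith [sq_abs s]
      exact (pow_le_pow_iff_left₀ hn0 (by positivity) (by norm_num)).1 this
    rw [mul_div_assoc', div_le_div_iff₀ (by positivity) (by positivity)]
    nlinarith [mul_le_mul_of_nonneg_left h2 (mul_nonneg hε.le hn0)]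
  · push Not at h
    rw [sub_zero, norm_inv, ← hnn, mul_div_assoc', inv_eq_one_div, div_le_div_iff₀ hnp (by positivity), one_mul]
    have h2 : n ≤ 2 * ε := by
      have : n ^ 2 ≤ (2 * ε) ^ 2 := by
        rw [hn]
        nlinarith [sq_abs s, abs_nonneg s]
      exact (pow_le_pow_iff_left₀ hn0 (by positivity) (by norm_num)).1 this
    nlinarith

lemma zzκ_int {ε : ℝ} (hε : 0 < ε) : Integrable (zzκ ε) :=
  ((zz_poisson_int hε).1.const_mul 2).mono' (zzκ_meas ε).aestronglyMeasurable
    (Eventually.of_forall (zzκ_norm hε))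

lemma zzκ_integral {ε : ℝ} (hε : 0 < ε) : ∫ s, zzκ ε s = -(Real.pi * Complex.I) := by
  have h1 : ∀ s, zzκ ε (-s) = - (starRingEnd ℂ) (zzκ ε s) := fun s => by
    unfold zzκ
    rw [abs_neg]
    split_ifs
    · simp only [map_sub, map_inv₀, map_add, map_mul, Complex.conj_ofReal, Complex.conj_I]
      push_cast
      rw [show (-(s : ℂ) + ε * Complex.I) = -(s + ε * -Complex.I) by ring, inv_neg, inv_neg]
      ring
    · simp only [map_sub, map_inv₀, map_add, map_mul, Complex.conj_ofReal, Complex.conj_I, map_zero]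
      push_cast
      rw [show (-(s : ℂ) + ε * Complex.I) = -(s + ε * -Complex.I) by ring, inv_neg]
      ring
  have h2 : ∫ s, zzκ ε s = - (starRingEnd ℂ) (∫ s, zzκ ε s) := by
    conv_lhs => rw [← integral_neg_eq_self]
    simp_rw [h1]
    rw [integral_neg, integral_conj]
  have h3 : (∫ s, zzκ ε s).im = -Real.pi := by
    have e : (∫ s, zzκ ε s).im = ∫ s, (zzκ ε s).im := (integral_im (zzκ_int hε)).symm
    rw [e, ← (zz_poisson_int hε).2, ← integral_neg]
    congr 1; ext s
    have h4 := zz_kernel_im s ε 0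
    simp only [Complex.ofReal_zero, sub_zero] at h4
    unfold zzκ
    rw [Complex.sub_im, h4]
    split_ifs <;> simp
  have h5 : (∫ s, zzκ ε s).re = 0 := by
    have := congrArg Complex.re h2
    rw [Complex.neg_re, Complex.conj_re] at this
    linarith
  apply Complex.ext <;> simp [h3, h5]

lemma zz_FHT_lim {f f1 : ℝ → ℂ} (hf1 : f1 = (Ioo (-1 : ℝ) 1).indicator f) (hi : Integrable f1)
    {β : ℝ} (hβ : 0 ≤ β) (hN : zzN (1 + β) f1 ≠ ⊤) :
    ∀ᵐ x : ℝ ∂μI, Tendsto (fun ε : ℝ => -(Real.pi : ℂ)⁻¹ *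
      (zzF f1 (x + ε * Complex.I) + Real.pi * Complex.I * f1 x)) (nhdsWithin 0 (Ioi 0)) (nhds (FHT f x)) := by
  have hs : ∀ y, y ∉ Ioo (-1 : ℝ) 1 → f1 y = 0 := fun y hy => by rw [hf1, indicator_of_notMem hy]
  have hnn : 0 ≤ ∫ y, ‖f1 y‖ := integral_nonneg fun _ => norm_nonneg _
  have hgrow : ∀ x r : ℝ, 0 < r → ∫⁻ y in Metric.closedBall x r, ‖f1 y‖ₑ ≤
      ENNReal.ofReal ((∫ y, ‖f1 y‖) * (1 + r)) := fun x r hr => by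
    refine (setLIntegral_le_lintegral _ _).trans ?_
    rw [← ofReal_integral_norm_eq_lintegral_enorm hi]
    exact ENNReal.ofReal_le_ofReal (by nlinarith)
  have hA : ∀ᵐ x : ℝ ∂μI, _ := ae_restrict_of_ae (zz_AI hi.locallyIntegrable hgrow)
  filter_upwards [zz_lim hi hs hβ hN, hA] with x hx hAx
  obtain ⟨l, hl⟩ := hx
  have hpi : (Real.pi : ℂ) ≠ 0 := by exact_mod_cast Real.pi_ne_zero
  have hκm : ∀ ε, Measurable (fun y => zzκ ε (x - y)) := fun ε => (zzκ_meas ε).comp (by fun_prop)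
  have hconv := zz_AI_conv (κ := fun ε y => zzκ ε (x - y)) (c := -(Real.pi * Complex.I)) hAx (M := 2) (by norm_num)
    (fun ε hε y => zzκ_norm hε _) (fun ε hε => (zzκ_int hε).comp_sub_left x)
    (fun ε hε => by
      refine hi.bdd_mul (c := 2 * (1 / ε)) (hκm ε).aestronglyMeasurable (Eventually.of_forall fun y => ?_)
      refine (zzκ_norm hε _).trans ?_
      gcongr 2 * ?_
      rw [div_le_div_iff₀ (by positivity) hε]; nlinarith [sq_nonneg (x - y)])
    (fun ε hε => by
      rw [integral_sub_left_eq_self (zzκ ε) volume x, zzκ_integral hε])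
  have hT : ∀ ε : ℝ, 0 < ε → ∫ y in {y : ℝ | y ∈ Ioo (-1 : ℝ) 1 ∧ ε ≤ |y - x|}, f y / ((y : ℂ) - (x : ℂ)) =
      (∫ y, zzκ ε (x - y) * f1 y) - zzF f1 (x + ε * Complex.I) := by
    intro ε hε
    have hz : 0 < ((x : ℂ) + ε * Complex.I).im := by simpa using hε
    have hSm : MeasurableSet {y : ℝ | y ∈ Ioo (-1 : ℝ) 1 ∧ ε ≤ |y - x|} :=
      measurableSet_Ioo.inter (s₂ := {y : ℝ | ε ≤ |y - x|})
        (measurableSet_le measurable_const (continuous_id.sub continuous_const).abs.measurable)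
    have hi2 : Integrable (fun y => zzκ ε (x - y) * f1 y) := by
      refine hi.bdd_mul (c := 2 * (1 / ε)) (hκm ε).aestronglyMeasurable (Eventually.of_forall fun y => ?_)
      refine (zzκ_norm hε _).trans ?_
      gcongr 2 * ?_
      rw [div_le_div_iff₀ (by positivity) hε]; nlinarith [sq_nonneg (x - y)]
    rw [zzF, ← integral_sub hi2 (zzF_integrable hi hz), ← integral_indicator hSm]
    refine integral_congr_ae (Eventually.of_forall fun y => ?_)
    simp only
    have e0 : ((x - y : ℝ) : ℂ) + ε * Complex.I = x + ε * Complex.I - y := by push_cast; ring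
    unfold zzκ
    rw [e0, abs_sub_comm x y]
    by_cases h1 : y ∈ Ioo (-1 : ℝ) 1
    · have hfy : f1 y = f y := by rw [hf1, indicator_of_mem h1]
      rw [hfy]
      by_cases h2 : ε ≤ |y - x|
      · rw [indicator_of_mem (show y ∈ {y : ℝ | y ∈ Ioo (-1 : ℝ) 1 ∧ ε ≤ |y - x|} from ⟨h1, h2⟩), if_pos h2]
        rw [show ((x - y : ℝ) : ℂ) = -((y : ℂ) - x) by push_cast; ring, inv_neg]
        ring
      · rw [indicator_of_notMem (fun h => h2 h.2), if_neg h2]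
        ring
    · rw [indicator_of_notMem (fun h => h1 h.1), hs y h1]
      simp
  have hfin : Tendsto (fun ε : ℝ => (Real.pi : ℂ)⁻¹ *
      ∫ y in {y : ℝ | y ∈ Ioo (-1 : ℝ) 1 ∧ ε ≤ |y - x|}, f y / ((y : ℂ) - (x : ℂ))) (nhdsWithin 0 (Ioi 0))
      (nhds ((Real.pi : ℂ)⁻¹ * (-(Real.pi * Complex.I) * f1 x - l))) := by
    refine ((hconv.sub hl).const_mul _).congr' ?_
    filter_upwards [self_mem_nhdsWithin] with ε hε
    rw [hT ε hε]
  have hF : FHT f x = (Real.pi : ℂ)⁻¹ * (-(Real.pi * Complex.I) * f1 x - l) := by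
    unfold FHT
    exact hfin.limUnder_eq
  rw [hF]
  have h9 := (hl.add_const (Real.pi * Complex.I * f1 x)).const_mul (-(Real.pi : ℂ)⁻¹)
  convert h9 using 2
  ring

lemma zz_unif {φ : ℝ → ℝ} (hφ : Measurable φ) {s : ℝ} (hs : 0 ≤ s) :
    μI {x | (μI {y | φ x ≤ φ y}).toReal < s} ≤ ENNReal.ofReal s := by
  set D : ℝ → ℝ := fun l => (μI {y | l ≤ φ y}).toReal with hD
  have hDa : Antitone D := fun a b hab =>
    ENNReal.toReal_mono (by finiteness) (measure_mono fun y hy => le_trans hab hy)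
  have hS : MeasurableSet {l | D l < s} := measurableSet_lt hDa.measurable measurable_const
  have e : μI {x | (μI {y | φ x ≤ φ y}).toReal < s} = (μI.map φ) {l | D l < s} := by
    rw [Measure.map_apply hφ hS]; rfl
  haveI : IsFiniteMeasure (μI.map φ) := Measure.isFiniteMeasure_map μI φ
  rw [e, hS.measure_eq_iSup_isCompact]
  refine iSup_le fun K => iSup_le fun hK => iSup_le fun hKc => ?_
  rcases K.eq_empty_or_nonempty with rfl | hne
  · simp
  obtain ⟨a, haK, ha⟩ := hKc.exists_isLeast hne
  have h1 : D a < s := hK haK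
  calc (μI.map φ) K ≤ (μI.map φ) (Ici a) := measure_mono fun y hy => ha hy
    _ = ENNReal.ofReal (D a) := by
        rw [Measure.map_apply hφ measurableSet_Ici, hD, ENNReal.ofReal_toReal (by finiteness)]
        rfl
    _ ≤ _ := ENNReal.ofReal_le_ofReal h1.le

lemma zz_half {d : ℝ → ℝ} (hd : Measurable d) (hd0 : ∀ x, 0 ≤ d x)
    (hu : ∀ s : ℝ, 0 ≤ s → μI {x | d x < s} ≤ ENNReal.ofReal s) :
    ∫⁻ x, ENNReal.ofReal (d x ^ (-(1/2) : ℝ)) ∂μI ≤ 3 := by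
  rw [lintegral_eq_lintegral_meas_lt μI (Eventually.of_forall fun x => Real.rpow_nonneg (hd0 x) _)
    (by fun_prop)]
  have hsplit : Ioi (0:ℝ) = Ioc 0 1 ∪ Ioi 1 := (Ioc_union_Ioi_eq_Ioi zero_le_one).symm
  rw [hsplit]
  refine (lintegral_union_le _ _ _).trans ?_
  have h1 : ∫⁻ t in Ioc (0:ℝ) 1, μI {a | t < d a ^ (-(1/2) : ℝ)} ≤ 2 := by
    calc _ ≤ ∫⁻ t in Ioc (0:ℝ) 1, (2 : ENNReal) := by
          refine lintegral_mono fun t => ?_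
          exact zz_μI_univ ▸ measure_mono (subset_univ _)
      _ = 2 := by simp
  have h2 : ∫⁻ t in Ioi (1:ℝ), μI {a | t < d a ^ (-(1/2) : ℝ)} ≤ 1 := by
    calc _ ≤ ∫⁻ t in Ioi (1:ℝ), ENNReal.ofReal (t ^ (-2 : ℝ)) := by
          refine setLIntegral_mono' measurableSet_Ioi fun t ht => ?_
          have ht0 : (0:ℝ) < t := zero_lt_one.trans ht
          refine le_trans (measure_mono fun x hx => ?_) (hu _ (by positivity))
          simp only [mem_ofPred_eq] at hx ⊢
          by_contra hc
          push Not at hc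
          have h3 : d x ^ (-(1/2) : ℝ) ≤ (t ^ (-2 : ℝ)) ^ (-(1/2) : ℝ) :=
            Real.rpow_le_rpow_of_nonpos (by positivity) hc (by norm_num)
          rw [← Real.rpow_mul ht0.le] at h3
          norm_num at h3
          norm_num at hx
          linarith
      _ = ENNReal.ofReal 1 := by
          rw [← ofReal_integral_eq_lintegral_ofReal (integrableOn_Ioi_rpow_of_lt (by norm_num) one_pos)
            (ae_restrict_of_forall_mem measurableSet_Ioi fun t ht => by
              have ht0 : (0:ℝ) < t := zero_lt_one.trans ht
              positivity), integral_Ioi_rpow_of_lt (by norm_num) one_pos]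
          norm_num
      _ = 1 := by simp
  calc _ ≤ (2 : ENNReal) + 1 := add_le_add h1 h2
    _ = 3 := by norm_num

/-- admissible weights -/
structure zzAdm (β B : ℝ) (g : ℝ → ℝ) : Prop where
  meas : Measurable g
  nonneg : ∀ x, 0 ≤ g x
  bdd : ∃ N, ∀ x, g x ≤ N
  supp : ∀ y, y ∉ Ioo (-1 : ℝ) 1 → g y = 0
  pow : ∀ k : ℕ, 1 ≤ k → ∫⁻ x, ENNReal.ofReal (g x) ^ (2 * k) ≤ ENNReal.ofReal (B * (k : ℝ) ^ β) ^ (2 * k)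

lemma zz_adm {β : ℝ} (hβ : 0 ≤ β) {d : ℝ → ℝ} (hd : Measurable d) (hd0 : ∀ x, 0 ≤ d x) (hd2 : ∀ x, d x ≤ 2)
    (hu : ∀ s : ℝ, 0 ≤ s → μI {x | d x < s} ≤ ENNReal.ofReal s) (N : ℕ) :
    zzAdm β (9 * (4 * (β + 1)) ^ β) ((Ioo (-1 : ℝ) 1).indicator fun x => max 0 (min (N : ℝ) (zzL (d x) ^ β))) := by
  have hpos : ∀ᵐ x ∂μI, 0 < d x := by
    rw [ae_iff]
    have h1 : ∀ n : ℕ, μI {x | ¬ 0 < d x} ≤ ENNReal.ofReal (1 / ((n : ℝ) + 1)) := fun n =>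
      le_trans (measure_mono fun x hx => by
        simp only [mem_ofPred_eq, not_lt] at hx ⊢
        exact lt_of_le_of_lt hx (by positivity)) (hu _ (by positivity))
    have h2 : Tendsto (fun n : ℕ => ENNReal.ofReal (1 / ((n : ℝ) + 1))) atTop (nhds (ENNReal.ofReal 0)) :=
      ENNReal.tendsto_ofReal tendsto_one_div_add_atTop_nhds_zero_nat
    rw [ENNReal.ofReal_zero] at h2
    exact le_antisymm (ge_of_tendsto' h2 h1) zero_le
  have hLm := zzL_meas
  have hm : Measurable (fun x => max 0 (min (N : ℝ) (zzL (d x) ^ β))) := by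
    have : Measurable (fun x => zzL (d x)) := hLm.comp hd
    fun_prop
  refine ⟨hm.indicator measurableSet_Ioo, fun x => indicator_nonneg (fun _ _ => le_max_left _ _) x,
    ⟨N, fun x => ?_⟩, fun y hy => indicator_of_notMem hy _, fun k hk => ?_⟩
  · by_cases hx : x ∈ Ioo (-1 : ℝ) 1
    · rw [indicator_of_mem hx]
      exact max_le (by positivity) (min_le_left _ _)
    · rw [indicator_of_notMem hx]; positivity
  have hk' : (1 : ℝ) ≤ k := by exact_mod_cast hk
  have e : ∀ x, ENNReal.ofReal ((Ioo (-1 : ℝ) 1).indicator (fun x => max 0 (min (N : ℝ) (zzL (d x) ^ β))) x) ^ (2 * k)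
      = (Ioo (-1 : ℝ) 1).indicator (fun x => ENNReal.ofReal (max 0 (min (N : ℝ) (zzL (d x) ^ β))) ^ (2 * k)) x := by
    intro x
    by_cases hx : x ∈ Ioo (-1 : ℝ) 1
    · rw [indicator_of_mem hx, indicator_of_mem hx]
    · rw [indicator_of_notMem hx, indicator_of_notMem hx]
      simp; omega
  simp_rw [e]
  rw [lintegral_indicator measurableSet_Ioo]
  change ∫⁻ x, _ ∂μI ≤ _
  set m : ℝ := 4 * k * (β + 1) with hmdef
  have hmp : 0 < m := by positivity
  have hE : (2 * Real.exp 1) ^ (1/2 : ℝ) ≤ 3 := by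
    rw [← Real.sqrt_eq_rpow, Real.sqrt_le_left (by norm_num)]
    have := Real.exp_one_lt_d9
    norm_num at this ⊢
    linarith
  have hpt : ∀ᵐ x ∂μI, ENNReal.ofReal (max 0 (min (N : ℝ) (zzL (d x) ^ β))) ^ (2 * k) ≤
      ENNReal.ofReal ((m ^ β) ^ (2 * k) * 3) * ENNReal.ofReal (d x ^ (-(1/2) : ℝ)) := by
    filter_upwards [hpos] with x hx
    have hL1 := zzL_ge_one hx (hd2 x)
    have ha : 1 ≤ 2 * Real.exp 1 / d x := by
      rw [le_div_iff₀ hx]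
      have := Real.add_one_le_exp 1
      have := hd2 x
      linarith
    rw [← ENNReal.ofReal_pow (le_max_left _ _), ← ENNReal.ofReal_mul (by positivity)]
    apply ENNReal.ofReal_le_ofReal
    have h1 : max 0 (min (N : ℝ) (zzL (d x) ^ β)) ≤ zzL (d x) ^ β :=
      max_le (by positivity) (min_le_right _ _)
    have h2 : zzL (d x) ≤ m * (2 * Real.exp 1 / d x) ^ (1 / m) := zz_log_pow ha hmp
    calc _ ≤ (zzL (d x) ^ β) ^ (2 * k) := by gcongr
      _ ≤ ((m * (2 * Real.exp 1 / d x) ^ (1 / m)) ^ β) ^ (2 * k) := by gcongr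
      _ = (m ^ β) ^ (2 * k) * (2 * Real.exp 1 / d x) ^ (1 / m * β * (2 * k : ℕ)) := by
          rw [Real.mul_rpow hmp.le (by positivity), mul_pow, ← Real.rpow_mul (by positivity),
            Real.rpow_mul_natCast (by positivity)]
      _ ≤ (m ^ β) ^ (2 * k) * (2 * Real.exp 1 / d x) ^ (1/2 : ℝ) := by
          gcongr
          rw [hmdef]
          push_cast
          rw [show 1 / (4 * (k:ℝ) * (β + 1)) * β * (2 * k) = β / (2 * (β + 1)) by field_simp; ring]
          rw [div_le_div_iff₀ (by positivity) (by norm_num)]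
          linarith
      _ ≤ (m ^ β) ^ (2 * k) * (3 * d x ^ (-(1/2) : ℝ)) := by
          rw [Real.div_rpow (by positivity) hx.le, Real.rpow_neg hx.le, div_eq_mul_inv]
          gcongr
      _ = _ := by ring
  calc _ ≤ _ := lintegral_mono_ae hpt
    _ ≤ ENNReal.ofReal ((m ^ β) ^ (2 * k) * 3) * 3 := by
        rw [lintegral_const_mul' _ _ (by finiteness)]
        gcongr
        exact zz_half hd hd0 hu
    _ = ENNReal.ofReal ((m ^ β) ^ (2 * k) * 9) := by
        rw [show (3 : ENNReal) = ENNReal.ofReal 3 by simp, ← ENNReal.ofReal_mul (by positivity)]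
        ring_nf
    _ ≤ _ := by
        rw [← ENNReal.ofReal_pow (by positivity)]
        apply ENNReal.ofReal_le_ofReal
        rw [show 9 * (4 * (β + 1)) ^ β * (k:ℝ) ^ β = 9 * m ^ β by
          rw [hmdef, mul_assoc, ← Real.mul_rpow (by positivity) (by positivity)]; ring_nf]
        rw [mul_pow, mul_comm]
        gcongr
        exact le_self_pow₀ (by norm_num) (by omega)

lemma zz_dual {β : ℝ} (hβ : 0 ≤ β) {Φ : ℝ → ℂ} (hΦ : AEStronglyMeasurable Φ μI) {Q : ENNReal}
    (hQ : ∀ g, zzAdm β (9 * (4 * (β + 1)) ^ β) g → ∫⁻ x, ‖Φ x‖ₑ * ENNReal.ofReal (g x) ∂μI ≤ Q) :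
    zzD β Φ ≤ Q := by
  set φ : ℝ → ℝ := fun x => ‖hΦ.mk Φ x‖ with hφ
  have hφm : Measurable φ := hΦ.stronglyMeasurable_mk.norm.measurable
  have hae : ∀ᵐ x ∂μI, ‖Φ x‖ = φ x := by
    filter_upwards [hΦ.ae_eq_mk] with x hx
    rw [hφ]; simp only; rw [← hx]
  set D : ℝ → ℝ := fun l => (μI {y | l ≤ φ y}).toReal with hD
  have hDa : Antitone D := fun a b hab =>
    ENNReal.toReal_mono (by finiteness) (measure_mono fun y hy => le_trans hab hy)
  set d : ℝ → ℝ := fun x => D (φ x) with hd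
  have hdm : Measurable d := hDa.measurable.comp hφm
  have hd0 : ∀ x, 0 ≤ d x := fun x => ENNReal.toReal_nonneg
  have hd2 : ∀ x, d x ≤ 2 := fun x => by
    have : μI {y | φ x ≤ φ y} ≤ 2 := zz_μI_univ ▸ measure_mono (subset_univ _)
    have := ENNReal.toReal_mono (by simp) this
    simpa using this
  have hu : ∀ s : ℝ, 0 ≤ s → μI {x | d x < s} ≤ ENNReal.ofReal s := fun s hs => zz_unif hφm hs
  have hpos : ∀ᵐ x ∂μI, 0 < d x := by
    rw [ae_iff]
    have h1 : ∀ n : ℕ, μI {x | ¬ 0 < d x} ≤ ENNReal.ofReal (1 / ((n : ℝ) + 1)) := fun n =>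
      le_trans (measure_mono fun x hx => by
        simp only [mem_ofPred_eq, not_lt] at hx ⊢
        exact lt_of_le_of_lt hx (by positivity)) (hu _ (by positivity))
    have h2 : Tendsto (fun n : ℕ => ENNReal.ofReal (1 / ((n : ℝ) + 1))) atTop (nhds (ENNReal.ofReal 0)) :=
      ENNReal.tendsto_ofReal tendsto_one_div_add_atTop_nhds_zero_nat
    rw [ENNReal.ofReal_zero] at h2
    exact le_antisymm (ge_of_tendsto' h2 h1) zero_le
  have hLm : Measurable (fun x => zzL (d x)) := zzL_meas.comp hdm
  set W : ℝ → ENNReal := fun x => ENNReal.ofReal (zzL (d x) ^ β) with hW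
  have hWm : Measurable W := by fun_prop
  have hdist : ∀ l, ENNReal.ofReal (distFun Φ l) = μI {x | l < φ x} := fun l => by
    rw [zz_distFun_ofReal]
    refine measure_congr ?_
    filter_upwards [hae] with x hx
    exact propext (by change l < ‖Φ x‖ ↔ l < φ x; rw [hx])
  -- step 1
  have h1 : zzD β Φ ≤ ∫⁻ x, ENNReal.ofReal (φ x) * W x ∂μI := by
    have h2 := lintegral_eq_lintegral_meas_lt (f := φ) (μI.withDensity W)
      (Eventually.of_forall fun x => norm_nonneg _) hφm.aemeasurable
    rw [lintegral_withDensity_eq_lintegral_mul _ hWm (by fun_prop)] at h2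
    simp only [Pi.mul_apply, mul_comm (W _)] at h2
    rw [h2, zzD]
    refine lintegral_mono fun l => ?_
    simp only
    rw [withDensity_apply', ENNReal.ofReal_mul (zz_distFun_nonneg _ _), hdist, mul_comm, ← setLIntegral_const]
    refine lintegral_mono_ae ?_
    have hms : MeasurableSet {x | l < φ x} := measurableSet_lt measurable_const hφm
    filter_upwards [ae_restrict_of_ae hpos, ae_restrict_mem hms] with x hx hxl
    apply ENNReal.ofReal_le_ofReal
    refine zzL_pow_anti hβ hx ?_ (zz_distFun_le _ _)
    have h3 : ENNReal.ofReal (d x) ≤ ENNReal.ofReal (distFun Φ l) := by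
      rw [hdist, hd, hD]
      simp only
      rw [ENNReal.ofReal_toReal (by finiteness)]
      exact measure_mono fun y hy => lt_of_lt_of_le hxl hy
    exact (ENNReal.ofReal_le_ofReal_iff (zz_distFun_nonneg _ _)).1 h3
  refine h1.trans ?_
  set gN : ℕ → ℝ → ℝ := fun N => (Ioo (-1 : ℝ) 1).indicator fun x => max 0 (min (N : ℝ) (zzL (d x) ^ β)) with hgN
  have hgm : ∀ N, Measurable (gN N) := fun N => (zz_adm hβ hdm hd0 hd2 hu N).meas
  have hI : ∀ᵐ x ∂μI, x ∈ Ioo (-1 : ℝ) 1 := ae_restrict_mem measurableSet_Ioo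
  have hlim := lintegral_tendsto_of_tendsto_of_monotone (μ := μI)
    (f := fun N x => ENNReal.ofReal (φ x) * ENNReal.ofReal (gN N x))
    (F := fun x => ENNReal.ofReal (φ x) * W x)
    (fun N => by have := hgm N; fun_prop)
    (Eventually.of_forall fun x a b hab => by
      simp only
      gcongr
      rw [hgN]
      refine indicator_le_indicator ?_
      gcongr)
    (by
      filter_upwards [hpos, hI] with x hx hxI
      refine tendsto_const_nhds.congr' ?_
      obtain ⟨n0, hn0⟩ := exists_nat_ge (zzL (d x) ^ β)
      filter_upwards [eventually_ge_atTop n0] with n hn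
      rw [hgN, hW]
      simp only
      have h3 : zzL (d x) ^ β ≤ n := hn0.trans (by exact_mod_cast hn)
      have h4 : 0 ≤ zzL (d x) ^ β := by linarith [zzL_pow_ge_one hβ hx (hd2 x)]
      rw [indicator_of_mem hxI, min_eq_right h3, max_eq_right h4])
  refine le_of_tendsto' hlim fun N => ?_
  refine le_trans (le_of_eq (lintegral_congr_ae ?_)) (hQ _ (zz_adm hβ hdm hd0 hd2 hu N))
  filter_upwards [hae] with x hx
  rw [← ofReal_norm, hx]

lemma zz_int_f {f : ℝ → ℂ} (hf : AEStronglyMeasurable f μI) {β : ℝ} (hβ : 0 ≤ β)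
    (hN : zzN (1 + β) f ≠ ⊤) : Integrable ((Ioo (-1 : ℝ) 1).indicator f) := by
  rw [integrable_indicator_iff measurableSet_Ioo]
  refine ⟨hf, ?_⟩
  change ∫⁻ x, ‖f x‖ₑ ∂μI < ⊤
  have h := zz_pair (H := (Ioo (-1 : ℝ) 1).indicator 1) (measurable_one.indicator measurableSet_Ioo).aemeasurable
    (A := 2) (α := 1 + β) (by norm_num) (by positivity) (fun k hk => ?_) hf
  · refine lt_of_le_of_lt (le_trans (le_of_eq ?_) h) (ENNReal.mul_lt_top ENNReal.ofReal_lt_top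
      (lt_of_le_of_lt (zzD_le_zzN hf (by positivity)) hN.lt_top))
    refine lintegral_congr_ae ?_
    filter_upwards [(ae_restrict_mem measurableSet_Ioo : ∀ᵐ x ∂μI, x ∈ Ioo (-1 : ℝ) 1)] with x hx
    simp [indicator_of_mem hx]
  · have e : ∀ x : ℝ, ((Ioo (-1 : ℝ) 1).indicator (1 : ℝ → ENNReal) x) ^ (2 * k) =
        (Ioo (-1 : ℝ) 1).indicator 1 x := fun x => by
      by_cases hx : x ∈ Ioo (-1 : ℝ) 1
      · simp [indicator_of_mem hx]
      · rw [indicator_of_notMem hx]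
        simp; omega
    simp_rw [e]
    rw [lintegral_indicator_one measurableSet_Ioo, Real.volume_Ioo, ← ENNReal.ofReal_pow (by positivity)]
    apply ENNReal.ofReal_le_ofReal
    have hk' : (1 : ℝ) ≤ k := by exact_mod_cast hk
    have h1 : (1 : ℝ) ≤ (k : ℝ) ^ (1 + β) := Real.one_le_rpow hk' (by positivity)
    have h2 : (2 : ℝ) ≤ 2 * (k : ℝ) ^ (1 + β) := by linarith
    calc (1 - -1 : ℝ) = 2 := by norm_num
      _ ≤ 2 * (k : ℝ) ^ (1 + β) := h2
      _ ≤ _ := le_self_pow₀ (by linarith) (by omega)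

lemma zz_main (β : ℝ) (hβ : 0 ≤ β) : ∃ C : ℝ, 0 < C ∧ ∀ f : ℝ → ℂ, AEStronglyMeasurable f μI →
    zzN (1 + β) f ≠ ⊤ → AEStronglyMeasurable (FHT f) μI ∧
      zzN β (FHT f) ≤ ENNReal.ofReal C * zzN (1 + β) f := by
  obtain ⟨C0, hC0, h0⟩ := zzN_le_zzD hβ
  set B : ℝ := 9 * (4 * (β + 1)) ^ β with hB
  have hBp : 0 < B := by positivity
  set C1 : ℝ := 2 * (2 * 2 ^ (1 + β) * (8 * Real.pi * B)) with hC1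
  set C2 : ℝ := 2 * 2 ^ (1 + β) * B with hC2
  have hC1p : 0 < C1 := by positivity
  have hC2p : 0 < C2 := by positivity
  refine ⟨C0 * (C1 + C2), by positivity, fun f hf hN => ?_⟩
  set f1 := (Ioo (-1 : ℝ) 1).indicator f with hf1
  have hi : Integrable f1 := zz_int_f hf hβ hN
  have hs : ∀ y, y ∉ Ioo (-1 : ℝ) 1 → f1 y = 0 := fun y hy => by rw [hf1, indicator_of_notMem hy]
  have hf1m : AEStronglyMeasurable f1 μI := hi.1.restrict
  have hN1 : zzN (1 + β) f1 ≤ zzN (1 + β) f :=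
    zzN_mono hf hf1m (fun x => norm_indicator_le_norm_self _ _) _
  have hN1t : zzN (1 + β) f1 ≠ ⊤ := ne_top_of_le_ne_top hN hN1
  have hlim := zz_FHT_lim hf1 hi hβ hN1t
  set e : ℕ → ℝ := fun n => 1 / ((n : ℝ) + 1) with he
  have hep : ∀ n, 0 < e n := fun n => by rw [he]; positivity
  have het : Tendsto e atTop (nhdsWithin 0 (Ioi 0)) :=
    tendsto_nhdsWithin_iff.2 ⟨tendsto_one_div_add_atTop_nhds_zero_nat, Eventually.of_forall hep⟩
  set G : ℕ → ℝ → ℂ := fun n x => -(Real.pi : ℂ)⁻¹ *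
      (zzF f1 (x + (e n : ℝ) * Complex.I) + Real.pi * Complex.I * f1 x) with hG
  have hGm : ∀ n, AEStronglyMeasurable (G n) μI := fun n =>
    (((zzF_cont hi (hep n)).aestronglyMeasurable).add (hf1m.const_mul _)).const_mul _
  have hGt : ∀ᵐ x ∂μI, Tendsto (fun n => G n x) atTop (nhds (FHT f x)) := by
    filter_upwards [hlim] with x hx
    exact hx.comp het
  have hΦ : AEStronglyMeasurable (FHT f) μI := aestronglyMeasurable_of_tendsto_ae atTop hGm hGt
  refine ⟨hΦ, ?_⟩
  have hGb : ∀ n x, ‖G n x‖ₑ ≤ ‖zzF f1 (x + (e n : ℝ) * Complex.I)‖ₑ + ‖f1 x‖ₑ := fun n x => by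
    have hpi : (1 : ℝ) ≤ Real.pi := by linarith [Real.pi_gt_three]
    have h1 : ‖G n x‖ ≤ ‖zzF f1 (x + (e n : ℝ) * Complex.I)‖ + ‖f1 x‖ := by
      have : G n x = -(Real.pi : ℂ)⁻¹ * zzF f1 (x + (e n : ℝ) * Complex.I) - Complex.I * f1 x := by
        rw [hG]
        have : (Real.pi : ℂ) ≠ 0 := by exact_mod_cast Real.pi_ne_zero
        simp only
        field_simp
        ring
      rw [this]
      refine (norm_sub_le _ _).trans ?_
      simp only [norm_mul, norm_neg, norm_inv, Complex.norm_real, Complex.norm_I, one_mul]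
      gcongr
      rw [Real.norm_of_nonneg Real.pi_pos.le]
      exact mul_le_of_le_one_left (norm_nonneg _) (inv_le_one_of_one_le₀ hpi)
    rw [← ofReal_norm, ← ofReal_norm, ← ofReal_norm, ← ENNReal.ofReal_add (norm_nonneg _) (norm_nonneg _)]
    exact ENNReal.ofReal_le_ofReal h1
  have hQ : zzD β (FHT f) ≤ ENNReal.ofReal (C1 + C2) * zzD (1 + β) f1 := by
    refine zz_dual hβ hΦ fun g hg => ?_
    obtain ⟨N, hgN⟩ := hg.bdd
    have hgm := hg.meas
    have hb1 : ∀ n, ∫⁻ x, ‖G n x‖ₑ * ENNReal.ofReal (g x) ∂μI ≤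
        ENNReal.ofReal (C1 + C2) * zzD (1 + β) f1 := fun n => by
      calc _ ≤ ∫⁻ x : ℝ, (‖zzF f1 (x + (e n : ℝ) * Complex.I)‖ₑ * ENNReal.ofReal (g x) +
            ‖f1 x‖ₑ * ENNReal.ofReal (g x)) ∂μI := by
            refine lintegral_mono fun x => ?_
            simp only
            rw [← add_mul]
            gcongr
            exact hGb n x
        _ = (∫⁻ x : ℝ, ‖zzF f1 (x + (e n : ℝ) * Complex.I)‖ₑ * ENNReal.ofReal (g x) ∂μI) +
            ∫⁻ x : ℝ, ‖f1 x‖ₑ * ENNReal.ofReal (g x) ∂μI := by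
            refine lintegral_add_left' ?_ _
            exact ((zzF_cont hi (hep n)).measurable.enorm.mul hgm.ennreal_ofReal).aemeasurable
        _ ≤ ENNReal.ofReal C1 * zzD (1 + β) f1 + ENNReal.ofReal C2 * zzD (1 + β) f1 := by
            refine add_le_add ?_ ?_
            · exact (setLIntegral_le_lintegral _ _).trans
                (zz_weight hi hs hgm hg.nonneg hgN hg.supp hBp.le hβ hg.pow (hep n))
            · refine zz_pair hgm.ennreal_ofReal.aemeasurable hBp.le (by positivity) (fun k hk => ?_) hf1m
              refine (hg.pow k hk).trans ?_
              have hk' : (1 : ℝ) ≤ k := by exact_mod_cast hk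
              gcongr
              linarith
        _ = _ := by rw [ENNReal.ofReal_add hC1p.le hC2p.le, add_mul]
    calc _ ≤ ∫⁻ x, liminf (fun n => ‖G n x‖ₑ * ENNReal.ofReal (g x)) atTop ∂μI := by
          refine lintegral_mono_ae ?_
          filter_upwards [hGt] with x hx
          have h1 : Tendsto (fun n => ‖G n x‖ₑ * ENNReal.ofReal (g x)) atTop
              (nhds (‖FHT f x‖ₑ * ENNReal.ofReal (g x))) :=
            ENNReal.Tendsto.mul_const hx.enorm (Or.inr ENNReal.ofReal_ne_top)
          rw [h1.liminf_eq]
      _ ≤ liminf (fun n => ∫⁻ x, ‖G n x‖ₑ * ENNReal.ofReal (g x) ∂μI) atTop :=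
          lintegral_liminf_le' fun n => (hGm n).enorm.mul hgm.ennreal_ofReal.aemeasurable
      _ ≤ _ := by
          refine (liminf_le_liminf (Eventually.of_forall hb1)).trans ?_
          rw [liminf_const]
  calc zzN β (FHT f) ≤ ENNReal.ofReal C0 * zzD β (FHT f) := h0 _ hΦ
    _ ≤ ENNReal.ofReal C0 * (ENNReal.ofReal (C1 + C2) * zzN (1 + β) f) := by
        gcongr
        exact hQ.trans (mul_le_mul_right ((zzD_le_zzN hf1m (by positivity)).trans hN1) _)
    _ = _ := by rw [← mul_assoc, ← ENNReal.ofReal_mul hC0.le]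

lemma zz_decRearr_meas {f : ℝ → ℂ} (hf : AEStronglyMeasurable f μI) (α : ℝ) :
    AEStronglyMeasurable (fun t => decRearr f t * zzL t ^ α) (volume.restrict (Ioo (0:ℝ) 2)) := by
  have h1 : AntitoneOn (decRearr f) (Ioo 0 2) := fun a ha b hb hab =>
    csInf_le_csInf ⟨0, fun x hx => hx.1⟩ (zz_distFun_tendsto hf ha.1) fun l hl => ⟨hl.1, hl.2.trans hab⟩
  have h2 := aemeasurable_restrict_of_antitoneOn (μ := volume) measurableSet_Ioo h1
  have h3 : Measurable (fun t => zzL t ^ α) := by have := zzL_meas; fun_prop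
  exact (h2.mul h3.aemeasurable).aestronglyMeasurable

lemma zz_nonneg_ae (f : ℝ → ℂ) (α : ℝ) :
    0 ≤ᵐ[volume.restrict (Ioo (0:ℝ) 2)] (fun t => decRearr f t * zzL t ^ α) := by
  filter_upwards [ae_restrict_mem measurableSet_Ioo] with t ht
  exact mul_nonneg (zz_decRearr_nonneg f t)
    (Real.rpow_nonneg (by linarith [zzL_ge_one ht.1 ht.2.le]) _)

lemma zz_final (β : ℝ) (hβ : 0 ≤ β) :
    ∃ C : ℝ, 0 < C ∧ ∀ f : ℝ → ℂ, MemZyg (1 + β) f →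
      MemZyg β (FHT f) ∧ zygNorm β (FHT f) ≤ C * zygNorm (1 + β) f := by
  obtain ⟨C, hC, h⟩ := zz_main β hβ
  refine ⟨C, hC, fun f hf => ?_⟩
  have h1 : ENNReal.ofReal (zygNorm (1 + β) f) = zzN (1 + β) f :=
    ofReal_integral_eq_lintegral_ofReal hf.2 (zz_nonneg_ae f _)
  have h1n : 0 ≤ zygNorm (1 + β) f := integral_nonneg_of_ae (zz_nonneg_ae f _)
  obtain ⟨h2, h3⟩ := h f hf.1 (by rw [← h1]; exact ENNReal.ofReal_ne_top)
  rw [← h1, ← ENNReal.ofReal_mul hC.le] at h3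
  have hm := zz_decRearr_meas h2 β
  have h4 : MemZyg β (FHT f) := by
    refine ⟨h2, hm, ?_⟩
    refine (hasFiniteIntegral_iff_ofReal (zz_nonneg_ae _ _)).2 ?_
    exact lt_of_le_of_lt h3 ENNReal.ofReal_lt_top
  refine ⟨h4, ?_⟩
  have h5 : ENNReal.ofReal (zygNorm β (FHT f)) = zzN β (FHT f) :=
    ofReal_integral_eq_lintegral_ofReal h4.2 (zz_nonneg_ae _ _)
  rw [← h5] at h3
  exact (ENNReal.ofReal_le_ofReal_iff (by positivity)).1 h3

end

/-- For every `β ≥ 0` the finite Hilbert transform maps `L(log L)^{1+β}(-1,1)` boundedly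
into `L(log L)^β(-1,1)`. -/
theorem FHT_Zygmund_bound (β : ℝ) (hβ : 0 ≤ β) :
    ∃ C : ℝ, 0 < C ∧ ∀ f : ℝ → ℂ, MemZyg (1 + β) f →
      MemZyg β (FHT f) ∧ zygNorm β (FHT f) ≤ C * zygNorm (1 + β) f := by
  exact zz_final β hβ
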